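/- arXiv:2106.07712 — 7 statements merged into one kernel-verified Lean document; each statement's English description precedes it below -/
import Mathlib

section
/- For every f ∈ F^∞ and every ε > 0 there exists g ∈ F^∞ such that g is real-analytic on (s̲,s̄) and sup_{s ∈ (s̲,s̄)} |g(s) − f(s)| < ε. In other words, the signals with real-analytic density functions are dense in F^∞ with respect to the sup-norm (L∞) metric. -/
/-!
Writing `f = s * h`, membership in `Fclass` means that `h` is continuous, bounded and nonnegative on
`(slo, shi)` with `∫ h = 2` and `∫ s h = 1`. It therefore suffices to approximate `h` uniformly by
nonnegative analytic functions with the same two moments.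

*Approximation* (`exists_analytic_approx`). The function `h` need not extend continuously to the
endpoints, so polynomials or a fixed-width convolution do not suffice. Instead, `h x` is replaced by
the weighted average of `h` with weight `y ↦ exp (-q x * (x - y)²)`, where `q` is analytic and grows
at the endpoints as fast as the local modulus of continuity of `h` requires
(`abs_kernel_average_sub_le`). Such a `q` is an entire function with rapidly growing values
(`exists_entire_majorant`) composed with `1 + 1 / ((x - a) * (b - x))`. Numerator and denominator of
the average extend holomorphically to a complex neighbourhood of the interval
(`differentiableOn_gaussian_integral`), so the average is real-analytic.

*Moments* (`exists_analytic_same_moments`). Let `G` be a nonnegative analytic function close to `h`.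
The product `G * (α + β s)` has the required moments when `(α, β)` solves a linear system whose matrix
is the Gram matrix of `1, s` for the weight `G`. For the weight `h` this matrix is invertible
(`half_lt_second_moment`) with solution `(1, 0)`, so for `G` close to `h` the factor `α + β s` is
uniformly close to `1`; the product is then nonnegative and close to `h`.
-/

open Set MeasureTheory
open scoped ENNReal

noncomputable section

/-- Cutoff of the match type: m(λ,c). -/
def mcut (u lam c : ℝ) : ℝ := lam * (1 + c) / (lam * (1 + c) + (u - c))

/-- Cutoff of the mismatch type: mm(λ,c). -/
def mmcut (v lam c : ℝ) : ℝ := lam * (1 - c) / (lam * (1 - c) + (v + c))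

/-- Confounding region E_c. -/
def Econf (u v slo shi c : ℝ) : Set ℝ :=
  {lam : ℝ | 0 < lam ∧ mcut u lam c ∈ Ioo slo shi ∧ mmcut v lam c ∈ Ioo slo shi}

/-- The signal class F^∞ on (slo, shi). -/
def Fclass (slo shi : ℝ) : Set (ℝ → ℝ) :=
  {f : ℝ → ℝ | ContinuousOn f (Ioo slo shi)
    ∧ (∀ s ∈ Ioo slo shi, 0 ≤ f s)
    ∧ (∫ s in slo..shi, f s) = 1
    ∧ (∫ s in slo..shi, f s * (1 - 2 * s) / s) = 0
    ∧ (∃ M : ℝ, ∀ s ∈ Ioo slo shi, |f s| ≤ M)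
    ∧ (∃ M : ℝ, ∀ s ∈ Ioo slo shi, |f s * (1 - s) / s| ≤ M)}

/-- G_f(λ,c). -/
def Gfun (p u v slo shi : ℝ) (f : ℝ → ℝ) (lam c : ℝ) : ℝ :=
  p * (∫ s in slo..(mcut u lam c), f s * (1 - 2 * s) / s)
  + (1 - p) * (∫ s in (mmcut v lam c)..shi, f s * (1 - 2 * s) / s)

/-- The shock set C. -/
def Cshock (u v slo shi : ℝ) : Set ℝ :=
  {c : ℝ | c ≠ 0 ∧ (Econf u v slo shi c).Nonempty}

/-- The meaningful shock set C_{ε₀}. -/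
def Ceps (u v slo shi e0 : ℝ) : Set ℝ :=
  Cshock u v slo shi ∩ Ioo (-1 + e0) (u - e0) ∩ Ioo (-v + e0) (1 - e0)

/-- The sup-norm (L∞) distance between two signals on (slo, shi). -/
def supDist (slo shi : ℝ) (f g : ℝ → ℝ) : ℝ :=
  ⨆ s : Ioo slo shi, |f s.1 - g s.1|

/-- `A` is nowhere dense in F^∞ w.r.t. the sup-norm metric: inside every ball of F^∞
there is a smaller ball of F^∞ disjoint from `A`. -/
def NowhereDenseIn (slo shi : ℝ) (A : Set (ℝ → ℝ)) : Prop :=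
  ∀ f ∈ Fclass slo shi, ∀ ε > (0:ℝ), ∃ g ∈ Fclass slo shi,
    supDist slo shi f g < ε ∧ ∃ δ > (0:ℝ), ∀ h ∈ A, ¬ supDist slo shi g h < δ

/-- `A` is meagre (of first category) in F^∞ w.r.t. the sup-norm metric. -/
def MeagreIn (slo shi : ℝ) (A : Set (ℝ → ℝ)) : Prop :=
  ∃ B : ℕ → Set (ℝ → ℝ), (∀ n, NowhereDenseIn slo shi (B n)) ∧ A ⊆ ⋃ n, B n

/-- `f` lies in the closure of `A` inside F^∞ w.r.t. the sup-norm metric. -/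
def InClosureIn (slo shi : ℝ) (A : Set (ℝ → ℝ)) (f : ℝ → ℝ) : Prop :=
  ∀ ε > (0:ℝ), ∃ g ∈ A, supDist slo shi f g < ε

/-- The stationary set S_f of a signal f. -/
def statSet (p u v slo shi e0 : ℝ) (f : ℝ → ℝ) : Set ℝ :=
  {c ∈ Ceps u v slo shi e0 | ∃ lam ∈ Econf u v slo shi 0 ∩ Econf u v slo shi c,
     Gfun p u v slo shi f lam 0 = 0 ∧ Gfun p u v slo shi f lam c = 0}

/-- F_n : signals whose stationary set has Lebesgue measure at least 1/n. -/
def Fn (p u v slo shi e0 : ℝ) (n : ℕ) : Set (ℝ → ℝ) :=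
  {f ∈ Fclass slo shi | (1 : ℝ≥0∞) / n ≤ volume (statSet p u v slo shi e0 f)}

/-- M_λ : shocks in C_{ε₀} whose cutoffs at λ lie in [slo, shi]. -/
def Mset (u v slo shi e0 lam : ℝ) : Set ℝ :=
  {c ∈ Ceps u v slo shi e0 | mcut u lam c ∈ Icc slo shi ∧ mmcut v lam c ∈ Icc slo shi}

/-- λ̲. -/
def lamLo (u v slo shi e0 : ℝ) : ℝ :=
  min ((u - sSup (Ceps u v slo shi e0)) / (1 + sSup (Ceps u v slo shi e0)))
      ((v + sInf (Ceps u v slo shi e0)) / (1 - sInf (Ceps u v slo shi e0)))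

/-- λ̄. -/
def lamHi (u v slo shi e0 : ℝ) : ℝ :=
  max ((u - sInf (Ceps u v slo shi e0)) / (1 + sInf (Ceps u v slo shi e0)))
      ((v + sSup (Ceps u v slo shi e0)) / (1 - sSup (Ceps u v slo shi e0)))

/-! ### Analytic approximation on an open interval -/

/-- An entire function, real on the real axis, that exceeds prescribed values `m n` on
`[n + 1, ∞)`: a series `∑ (2z/(n+1)) ^ k n` whose exponents grow fast enough both for local uniform
convergence (`n ≤ k n`) and for the lower bound (`m n ≤ 2 ^ k n`). -/
lemma exists_entire_majorant (m : ℕ → ℝ) :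
    ∃ (P : ℂ → ℂ) (p : ℝ → ℝ), Differentiable ℂ P ∧ (∀ t : ℝ, P t = p t) ∧
      ∀ (n : ℕ) (t : ℝ), (n : ℝ) + 1 ≤ t → m n ≤ p t := by
  let k : ℕ → ℕ := fun n => n + ⌈m n⌉₊
  have hsum : ∀ R : ℝ, 0 ≤ R → Summable fun n : ℕ => (2 * R / ((n : ℝ) + 1)) ^ k n := by
    intro R hR
    refine Summable.of_norm_bounded_eventually_nat (g := fun n : ℕ => (1 / 2 : ℝ) ^ n)
      summable_geometric_two ?_
    filter_upwards [Filter.eventually_ge_atTop ⌈4 * R⌉₊] with n hn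
    have hn' : 4 * R ≤ n := Nat.ceil_le.mp hn
    have h1 : 2 * R / ((n : ℝ) + 1) ≤ 1 / 2 := by
      rw [div_le_div_iff₀ (by positivity) (by norm_num)]; linarith
    rw [Real.norm_of_nonneg (by positivity)]
    calc (2 * R / ((n : ℝ) + 1)) ^ k n ≤ (1 / 2 : ℝ) ^ k n :=
          pow_le_pow_left₀ (by positivity) h1 _
      _ ≤ (1 / 2 : ℝ) ^ n :=
          pow_le_pow_of_le_one (by norm_num) (by norm_num) (Nat.le_add_right _ _)
  refine ⟨fun z => ∑' n : ℕ, (2 * z / ((n : ℂ) + 1)) ^ k n,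
    fun t => ∑' n : ℕ, (2 * t / ((n : ℝ) + 1)) ^ k n, ?_, ?_, ?_⟩
  · intro z
    have hd : DifferentiableOn ℂ (fun z => ∑' n : ℕ, (2 * z / ((n : ℂ) + 1)) ^ k n)
        (Metric.ball 0 (‖z‖ + 1)) := by
      refine Complex.differentiableOn_tsum_of_summable_norm (hsum (‖z‖ + 1) (by positivity))
        (fun n => ?_) Metric.isOpen_ball ?_
      · exact (((differentiable_id.const_mul (2 : ℂ)).div_const _).pow _).differentiableOn
      · intro n w hw
        have hw' : ‖w‖ ≤ ‖z‖ + 1 := by simpa using (mem_ball_zero_iff.mp hw).le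
        have hn : ‖(n : ℂ) + 1‖ = (n : ℝ) + 1 := by
          rw [← Nat.cast_succ, Complex.norm_natCast, Nat.cast_succ]
        rw [norm_pow, norm_div, norm_mul, hn]
        simp only [Complex.norm_ofNat]
        gcongr
    exact hd.differentiableAt (Metric.isOpen_ball.mem_nhds (by simp))
  · intro t
    rw [Complex.ofReal_tsum]
    push_cast
    rfl
  · intro n t ht
    have ht0 : 0 ≤ t := le_trans (by positivity) ht
    have h2 : (2 : ℝ) ≤ 2 * t / ((n : ℝ) + 1) := by
      rw [le_div_iff₀ (by positivity)]; linarith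
    calc m n ≤ ⌈m n⌉₊ := Nat.le_ceil _
      _ ≤ (k n : ℝ) := by exact_mod_cast Nat.le_add_left _ _
      _ ≤ (2 : ℝ) ^ k n := by exact_mod_cast Nat.lt_two_pow_self.le
      _ ≤ (2 * t / ((n : ℝ) + 1)) ^ k n := pow_le_pow_left₀ (by norm_num) h2 _
      _ ≤ _ := (hsum t ht0).le_tsum n fun j _ => by positivity

/-- Holomorphy in `z` of the Gaussian-type average whose inverse squared width `Q z` varies
holomorphically. The integration is over a bounded interval, so no decay of the kernel (hence no
sign condition on `Q`) is needed. -/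
lemma differentiableOn_gaussian_integral {a b M : ℝ} {h : ℝ → ℝ}
    (hc : ContinuousOn h (Ioo a b)) (hM : ∀ x ∈ Ioo a b, |h x| ≤ M)
    {Q : ℂ → ℂ} {U : Set ℂ} (hU : IsOpen U) (hQ : DifferentiableOn ℂ Q U) :
    DifferentiableOn ℂ
      (fun z => ∫ y in Ioo a b, (h y : ℂ) * Complex.exp (-(Q z * (z - y) ^ 2))) U := by
  intro z₀ hz₀
  obtain ⟨r, hr, hrU⟩ := Metric.nhds_basis_closedBall.mem_iff.mp (hU.mem_nhds hz₀)
  have hQc : ContinuousOn Q U := hQ.continuousOn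
  have hQ'c : ContinuousOn (deriv Q) U := (hQ.deriv hU).continuousOn
  let L : ℂ → ℝ → ℂ := fun z y => Complex.exp (-(Q z * (z - y) ^ 2)) *
    (-(deriv Q z * (z - y) ^ 2 + Q z * (2 * (z - y))))
  have hLc : ContinuousOn (fun q : ℂ × ℝ => L q.1 q.2) (U ×ˢ univ) := by
    have e1 : ContinuousOn (fun q : ℂ × ℝ => Q q.1) (U ×ˢ univ) :=
      hQc.comp continuousOn_fst fun q hq => hq.1
    have e2 : ContinuousOn (fun q : ℂ × ℝ => deriv Q q.1) (U ×ˢ univ) :=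
      hQ'c.comp continuousOn_fst fun q hq => hq.1
    have e3 : ContinuousOn (fun q : ℂ × ℝ => q.1 - (q.2 : ℂ)) (U ×ˢ univ) := by fun_prop
    exact (e1.mul (e3.pow 2)).neg.cexp.mul
      ((e2.mul (e3.pow 2)).add (e1.mul (e3.const_mul 2))).neg
  obtain ⟨C, hC⟩ := ((isCompact_closedBall z₀ r).prod
    (isCompact_Icc (a := a) (b := b))).exists_bound_of_continuousOn
    (hLc.mono (prod_mono hrU (subset_univ _)))
  have hhm : AEStronglyMeasurable (fun y => (h y : ℂ)) (volume.restrict (Ioo a b)) :=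
    (Complex.continuous_ofReal.comp_continuousOn hc).aestronglyMeasurable measurableSet_Ioo
  have hKc : ∀ z : ℂ, Continuous fun y : ℝ => Complex.exp (-(Q z * (z - y) ^ 2)) := by
    intro z; fun_prop
  have hFm : ∀ z : ℂ, AEStronglyMeasurable
      (fun y : ℝ => (h y : ℂ) * Complex.exp (-(Q z * (z - y) ^ 2)))
      (volume.restrict (Ioo a b)) := fun z => hhm.mul (hKc z).aestronglyMeasurable
  obtain ⟨C₀, hC₀⟩ := (isCompact_Icc (a := a) (b := b)).exists_bound_of_continuousOn
    (hKc z₀).continuousOn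
  have key := hasDerivAt_integral_of_dominated_loc_of_deriv_le
    (μ := volume.restrict (Ioo a b)) (𝕜 := ℂ) (x₀ := z₀) (bound := fun _ => M * C)
    (F := fun z y => (h y : ℂ) * Complex.exp (-(Q z * (z - y) ^ 2)))
    (F' := fun z y => (h y : ℂ) * L z y)
    (Metric.closedBall_mem_nhds z₀ hr) (Filter.Eventually.of_forall hFm) ?_ ?_ ?_ ?_ ?_
  · exact key.2.differentiableAt.differentiableWithinAt
  · refine Integrable.of_bound (hFm z₀) (M * C₀) ?_
    filter_upwards [ae_restrict_mem measurableSet_Ioo] with y hy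
    rw [norm_mul, Complex.norm_real]
    exact mul_le_mul (hM y hy) (hC₀ y (Ioo_subset_Icc_self hy)) (norm_nonneg _)
      ((abs_nonneg _).trans (hM y hy))
  · refine hhm.mul (Continuous.aestronglyMeasurable ?_)
    fun_prop
  · filter_upwards [ae_restrict_mem measurableSet_Ioo] with y hy z hz
    rw [norm_mul, Complex.norm_real]
    exact mul_le_mul (hM y hy) (hC (z, y) ⟨hz, Ioo_subset_Icc_self hy⟩) (norm_nonneg _)
      ((abs_nonneg _).trans (hM y hy))
  · exact integrable_const _
  · refine Filter.Eventually.of_forall fun y z hz => ?_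
    have hQd : HasDerivAt Q (deriv Q z) z :=
      (hQ.differentiableAt (hU.mem_nhds (hrU hz))).hasDerivAt
    have hp : HasDerivAt (fun z : ℂ => (z - y) ^ 2) (2 * (z - y)) z := by
      simpa using ((hasDerivAt_id z).sub_const (y : ℂ)).fun_pow 2
    exact ((hQd.mul hp).neg.cexp).const_mul _

/-- If `h` oscillates by at most `ε` on the `δ`-ball around `x`, then the normalized Gaussian average
of `h` with sharpness `e` is within `2 * ε` of `h x`, once `e` is large compared with `δ⁻³`. The
mass of the kernel is at least `δ * exp (-e δ² / 4)`, whereas outside the `δ`-ball the kernel is at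
most `exp (-e δ²)`. -/
lemma abs_kernel_average_sub_le {a b M ε δ e x : ℝ} {h : ℝ → ℝ}
    (hc : ContinuousOn h (Ioo a b)) (hM : ∀ y ∈ Ioo a b, |h y| ≤ M) (hx : x ∈ Ioo a b)
    (hε : 0 < ε) (hδ : 0 < δ) (hsub : Metric.ball x δ ⊆ Ioo a b)
    (hosc : ∀ y ∈ Metric.ball x δ, |h y - h x| ≤ ε)
    (he : 4 * M * (b - a) / (ε * δ ^ 3) ≤ e) :
    |(∫ y in Ioo a b, h y * Real.exp (-(e * (x - y) ^ 2))) /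
        (∫ y in Ioo a b, Real.exp (-(e * (x - y) ^ 2))) - h x| ≤ 2 * ε ∧
      0 < ∫ y in Ioo a b, Real.exp (-(e * (x - y) ^ 2)) := by
  have hM0 : 0 ≤ M := (abs_nonneg _).trans (hM x hx)
  have hab : 0 < b - a := by linarith [hx.1, hx.2]
  have he0 : 0 ≤ e := le_trans (by positivity) he
  set K : ℝ → ℝ := fun y => Real.exp (-(e * (x - y) ^ 2)) with hK
  have hKc : Continuous K := by fun_prop
  have hKpos : ∀ y, 0 < K y := fun y => Real.exp_pos _
  have hKle : ∀ y, K y ≤ 1 := fun y => Real.exp_le_one_iff.mpr (by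
    have := mul_nonneg he0 (sq_nonneg (x - y)); linarith)
  have hKi : IntegrableOn K (Ioo a b) :=
    Integrable.of_bound hKc.aestronglyMeasurable 1
      (Filter.Eventually.of_forall fun y => by
        rw [Real.norm_of_nonneg (hKpos y).le]; exact hKle y)
  have hhKi : IntegrableOn (fun y => h y * K y) (Ioo a b) := by
    refine Integrable.of_bound ((hc.mul hKc.continuousOn).aestronglyMeasurable
      measurableSet_Ioo) M ?_
    filter_upwards [ae_restrict_mem measurableSet_Ioo] with y hy
    rw [norm_mul, Real.norm_of_nonneg (hKpos y).le, Real.norm_eq_abs]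
    calc |h y| * K y ≤ M * 1 := mul_le_mul (hM y hy) (hKle y) (hKpos y).le hM0
      _ = M := mul_one M
  have hlow : δ * Real.exp (-(e * (δ / 2) ^ 2)) ≤ ∫ y in Ioo a b, K y := by
    have hs : Ioo (x - δ / 2) (x + δ / 2) ⊆ Ioo a b := by
      refine Subset.trans ?_ hsub
      rw [Real.ball_eq_Ioo]
      exact Ioo_subset_Ioo (by linarith) (by linarith)
    calc δ * Real.exp (-(e * (δ / 2) ^ 2))
        = ∫ y in Ioo (x - δ / 2) (x + δ / 2), Real.exp (-(e * (δ / 2) ^ 2)) := by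
          rw [setIntegral_const, Real.volume_real_Ioo_of_le (by linarith), smul_eq_mul]
          ring
      _ ≤ ∫ y in Ioo (x - δ / 2) (x + δ / 2), K y := by
          refine setIntegral_mono_on (integrableOn_const (by simp)) (hKi.mono_set hs)
            measurableSet_Ioo fun y hy => ?_
          refine Real.exp_le_exp.mpr (neg_le_neg (mul_le_mul_of_nonneg_left ?_ he0))
          exact sq_le_sq' (by linarith [hy.2]) (by linarith [hy.1])
      _ ≤ ∫ y in Ioo a b, K y :=
          setIntegral_mono_set hKi (Filter.Eventually.of_forall fun y => (hKpos y).le)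
            hs.eventuallyLE
  have hD : 0 < ∫ y in Ioo a b, K y := lt_of_lt_of_le (by positivity) hlow
  have htail : 2 * M * Real.exp (-(e * δ ^ 2)) * (b - a) ≤ ε * ∫ y in Ioo a b, K y := by
    have h1 : 4 * M * (b - a) ≤ e * (ε * δ ^ 3) := (div_le_iff₀ (by positivity)).mp he
    have h2 : e * δ ^ 2 * (3 / 4) ≤ Real.exp (e * δ ^ 2 * (3 / 4)) := by
      linarith [Real.add_one_le_exp (e * δ ^ 2 * (3 / 4))]
    have h3 : 2 * M * (b - a) ≤ ε * δ * Real.exp (e * δ ^ 2 * (3 / 4)) := by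
      have := mul_le_mul_of_nonneg_left h2 (by positivity : 0 ≤ ε * δ)
      have h4 : 0 ≤ e * (ε * δ ^ 3) := by positivity
      nlinarith
    calc 2 * M * Real.exp (-(e * δ ^ 2)) * (b - a)
        = 2 * M * (b - a) * Real.exp (-(e * δ ^ 2)) := by ring
      _ ≤ ε * δ * Real.exp (e * δ ^ 2 * (3 / 4)) * Real.exp (-(e * δ ^ 2)) :=
          mul_le_mul_of_nonneg_right h3 (Real.exp_pos _).le
      _ = ε * (δ * Real.exp (-(e * (δ / 2) ^ 2))) := by
          rw [mul_assoc (ε * δ), ← Real.exp_add, mul_assoc]; ring_nf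
      _ ≤ _ := mul_le_mul_of_nonneg_left hlow hε.le
  refine ⟨?_, hD⟩
  have hdiff : (∫ y in Ioo a b, h y * K y) - h x * ∫ y in Ioo a b, K y
      = ∫ y in Ioo a b, (h y * K y - h x * K y) := by
    rw [integral_sub hhKi (hKi.const_mul _), integral_const_mul]
  have hbd : |(∫ y in Ioo a b, h y * K y) - h x * ∫ y in Ioo a b, K y|
      ≤ 2 * ε * ∫ y in Ioo a b, K y := by
    rw [hdiff, ← Real.norm_eq_abs]
    calc _ ≤ ∫ y in Ioo a b, (ε * K y + 2 * M * Real.exp (-(e * δ ^ 2))) := by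
          refine norm_integral_le_of_norm_le ((hKi.const_mul ε).add (integrable_const _)) ?_
          filter_upwards [ae_restrict_mem measurableSet_Ioo] with y hy
          rw [← sub_mul, norm_mul, Real.norm_of_nonneg (hKpos y).le, Real.norm_eq_abs]
          by_cases hyx : y ∈ Metric.ball x δ
          · have := mul_le_mul_of_nonneg_right (hosc y hyx) (hKpos y).le
            have : 0 ≤ 2 * M * Real.exp (-(e * δ ^ 2)) := by positivity
            linarith
          · have h1 : |h y - h x| ≤ 2 * M := by
              linarith [abs_sub (h y) (h x), hM y hy, hM x hx]
            have h2 : K y ≤ Real.exp (-(e * δ ^ 2)) := by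
              refine Real.exp_le_exp.mpr (neg_le_neg (mul_le_mul_of_nonneg_left ?_ he0))
              rw [Metric.mem_ball, not_lt, dist_comm, Real.dist_eq] at hyx
              rw [← sq_abs (x - y)]
              exact pow_le_pow_left₀ hδ.le hyx 2
            have := mul_le_mul h1 h2 (hKpos y).le (by positivity)
            have : 0 ≤ ε * K y := mul_nonneg hε.le (hKpos y).le
            linarith
      _ = ε * (∫ y in Ioo a b, K y) + 2 * M * Real.exp (-(e * δ ^ 2)) * (b - a) := by
          rw [integral_add (hKi.const_mul ε) (integrable_const _), integral_const_mul,
            setIntegral_const, Real.volume_real_Ioo_of_le (by linarith), smul_eq_mul]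
          ring
      _ ≤ _ := by linarith
  rw [div_sub' hD.ne', abs_div, abs_of_pos hD, div_le_iff₀ hD, mul_comm _ (h x)]
  exact hbd

/-- A bounded continuous function on an open interval is a uniform limit of real-analytic functions.
No continuity at the endpoints is available, so the sharpness `q x` of the averaging kernel has to
blow up there, at a rate dictated by the local modulus of continuity of `h`. -/
lemma exists_analytic_approx {a b M ε : ℝ} {h : ℝ → ℝ}
    (hc : ContinuousOn h (Ioo a b)) (hM : ∀ x ∈ Ioo a b, |h x| ≤ M) (hε : 0 < ε) :
    ∃ G : ℝ → ℝ, AnalyticOnNhd ℝ G (Ioo a b) ∧ ∀ x ∈ Ioo a b, |G x - h x| ≤ 2 * ε := by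
  -- The compact sets `S n` exhaust `(a, b)`.
  let S : ℕ → Set ℝ := fun n => {x ∈ Icc a b | 1 ≤ ((n : ℝ) + 1) * ((x - a) * (b - x))}
  have hSc : ∀ n, IsCompact (S n) := by
    intro n
    have hcl : IsClosed {x : ℝ | 1 ≤ ((n : ℝ) + 1) * ((x - a) * (b - x))} :=
      isClosed_le continuous_const (by fun_prop)
    exact isCompact_Icc.inter_right hcl
  have hSs : ∀ n, S n ⊆ Ioo a b := by
    rintro n x ⟨⟨hxa, hxb⟩, hx⟩
    refine ⟨lt_of_le_of_ne hxa ?_, lt_of_le_of_ne hxb ?_⟩ <;>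
    · rintro rfl
      norm_num at hx
  have hδ : ∀ n, ∃ δ > 0, ∀ x ∈ S n, Metric.ball x δ ⊆ Ioo a b ∧
      ∀ y ∈ Metric.ball x δ, |h y - h x| ≤ ε := by
    intro n
    obtain ⟨δ₁, hδ₁, h₁⟩ := (hSc n).exists_thickening_subset_open isOpen_Ioo (hSs n)
    obtain ⟨δ₂, hδ₂, h₂⟩ := Metric.mem_uniformity_dist.mp
      ((hSc n).uniformContinuousAt_of_continuousAt h
        (fun x hx => hc.continuousAt (isOpen_Ioo.mem_nhds (hSs n hx)))
        (Metric.dist_mem_uniformity hε))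
    refine ⟨min δ₁ δ₂, lt_min hδ₁ hδ₂, fun x hx => ⟨?_, fun y hy => ?_⟩⟩
    · exact ((Metric.ball_subset_ball (min_le_left _ _)).trans
        (Metric.ball_subset_thickening hx δ₁)).trans h₁
    · have hxy : dist x y < δ₂ := by
        rw [dist_comm]; exact lt_of_lt_of_le hy (min_le_right _ _)
      have : dist (h x) (h y) < ε := h₂ hxy hx
      rw [dist_comm] at this
      exact this.le
  choose δ hδ0 hδS using hδ
  obtain ⟨P, p, hP, hPp, hpm⟩ :=
    exists_entire_majorant fun n => 4 * M * (b - a) / (ε * δ n ^ 3)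
  -- `1 + 1 / ((x - a) * (b - x))` maps `(a, b)` to `(1, ∞)` and lies in `[n + 1, n + 2)` on a subset
  -- of `S n`, where `p` exceeds the bound needed for the radius `δ n`.
  let Q : ℂ → ℂ := fun z => P (1 + ((z - a) * (b - z))⁻¹)
  let q : ℝ → ℝ := fun x => p (1 + ((x - a) * (b - x))⁻¹)
  have hQq : ∀ x : ℝ, Q x = q x := by
    intro x
    simp only [Q, q]
    rw [← hPp]
    push_cast
    rfl
  let U : Set ℂ := {z | (z - a) * (b - z) ≠ 0}
  have hU : IsOpen U := isOpen_ne_fun (by fun_prop) continuous_const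
  have hIU : ∀ x ∈ Ioo a b, (x : ℂ) ∈ U := by
    intro x hx
    have : (x - a) * (b - x) ≠ 0 := (mul_pos (by linarith [hx.1]) (by linarith [hx.2])).ne'
    have h2 : (((x - a) * (b - x) : ℝ) : ℂ) ≠ 0 := Complex.ofReal_ne_zero.mpr this
    push_cast at h2
    exact h2
  have hQ : DifferentiableOn ℂ Q U := by
    intro z hz
    refine (hP.differentiableAt.comp z ?_).differentiableWithinAt
    have hw : DifferentiableAt ℂ (fun z : ℂ => (z - a) * (b - z)) z := by fun_prop
    exact (hw.fun_inv hz).const_add 1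
  have han : ∀ k : ℝ → ℝ, ∀ M : ℝ, ContinuousOn k (Ioo a b) → (∀ x ∈ Ioo a b, |k x| ≤ M) →
      AnalyticOnNhd ℝ (fun x => ∫ y in Ioo a b, k y * Real.exp (-(q x * (x - y) ^ 2)))
        (Ioo a b) := by
    intro k M hk hkM x hx
    have h1 := ((differentiableOn_gaussian_integral hk hkM hU hQ).analyticAt
      (hU.mem_nhds (hIU x hx))).re_ofReal
    refine h1.congr (Filter.Eventually.of_forall fun t => ?_)
    have h2 : ∀ y : ℝ, (k y : ℂ) * Complex.exp (-(Q t * ((t : ℂ) - y) ^ 2))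
        = ((k y * Real.exp (-(q t * (t - y) ^ 2)) : ℝ) : ℂ) := by
      intro y
      rw [hQq]
      push_cast
      rfl
    simp only [h2, integral_complex_ofReal, Complex.ofReal_re]
  have hest : ∀ x ∈ Ioo a b, _ := fun x hx => by
    have hpos : 0 < (x - a) * (b - x) := mul_pos (by linarith [hx.1]) (by linarith [hx.2])
    let n := ⌊((x - a) * (b - x))⁻¹⌋₊
    have hn : (n : ℝ) ≤ ((x - a) * (b - x))⁻¹ := Nat.floor_le (by positivity)
    have hn' : ((x - a) * (b - x))⁻¹ < (n : ℝ) + 1 := Nat.lt_floor_add_one _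
    have hxS : x ∈ S n := by
      refine ⟨Ioo_subset_Icc_self hx, ?_⟩
      exact ((inv_lt_iff_one_lt_mul₀ hpos).mp hn').le
    exact abs_kernel_average_sub_le hc hM hx hε (hδ0 n) (hδS n x hxS).1 (hδS n x hxS).2
      (hpm n (1 + ((x - a) * (b - x))⁻¹) (by linarith))
  refine ⟨fun x => (∫ y in Ioo a b, h y * Real.exp (-(q x * (x - y) ^ 2))) /
    (∫ y in Ioo a b, Real.exp (-(q x * (x - y) ^ 2))), ?_, fun x hx => (hest x hx).1⟩
  refine (han h M hc hM).div ?_ fun x hx => (hest x hx).2.ne'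
  simpa using han (fun _ => 1) 1 continuousOn_const (by simp)

/-! ### Restoring the moments -/

lemma integrableOn_pow_mul {a b M : ℝ} {h : ℝ → ℝ} (ha : 0 ≤ a) (hb : b ≤ 1)
    (hc : ContinuousOn h (Ioo a b)) (hM : ∀ x ∈ Ioo a b, |h x| ≤ M) (k : ℕ) :
    IntegrableOn (fun s => s ^ k * h s) (Ioo a b) := by
  refine Integrable.of_bound (((continuousOn_id.pow k).mul hc).aestronglyMeasurable
    measurableSet_Ioo) M ?_
  filter_upwards [ae_restrict_mem measurableSet_Ioo] with s hs
  have hs0 : 0 ≤ s := ha.trans hs.1.le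
  have h1 : s ^ k ≤ 1 := pow_le_one₀ hs0 (hs.2.le.trans hb)
  simp only [norm_mul, Real.norm_eq_abs, abs_of_nonneg (pow_nonneg hs0 k)]
  calc s ^ k * |h s| ≤ 1 * |h s| := mul_le_mul_of_nonneg_right h1 (abs_nonneg _)
    _ ≤ M := by rw [one_mul]; exact hM s hs

/-- Strict positivity of `∫ (s - 1/2)² h`; with zeroth moment `2` and first moment `1` this says that
the Gram determinant `m₀ m₂ - m₁²` is positive. -/
lemma half_lt_second_moment {a b M : ℝ} {h : ℝ → ℝ} (ha : 0 ≤ a) (hb : b ≤ 1)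
    (hc : ContinuousOn h (Ioo a b)) (hM : ∀ x ∈ Ioo a b, |h x| ≤ M)
    (h0 : ∀ x ∈ Ioo a b, 0 ≤ h x) (m0 : ∫ s in Ioo a b, s ^ 0 * h s = 2)
    (m1 : ∫ s in Ioo a b, s ^ 1 * h s = 1) : 1 / 2 < ∫ s in Ioo a b, s ^ 2 * h s := by
  have I := integrableOn_pow_mul ha hb hc hM
  have hvar : ∫ s in Ioo a b, (s - 1 / 2) ^ 2 * h s
      = (∫ s in Ioo a b, s ^ 2 * h s) - 1 / 2 := by
    have e : ∀ s, (s - 1 / 2) ^ 2 * h s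
        = s ^ 2 * h s - s ^ 1 * h s + 1 / 4 * (s ^ 0 * h s) := fun s => by ring
    simp only [e]
    have I21 : Integrable (fun s => s ^ 2 * h s - s ^ 1 * h s) (volume.restrict (Ioo a b)) :=
      (I 2).sub (I 1)
    rw [integral_add I21 ((I 0).const_mul _), integral_sub (I 2) (I 1),
      integral_const_mul, m0, m1]
    ring
  have hi : IntegrableOn (fun s => (s - 1 / 2) ^ 2 * h s) (Ioo a b) := by
    refine (((I 2).sub (I 1)).add ((I 0).const_mul (1 / 4))).congr
      (Filter.Eventually.of_forall fun s => ?_)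
    simp only [Pi.add_apply, Pi.sub_apply]
    ring
  have hnn : 0 ≤ᵐ[volume.restrict (Ioo a b)] fun s => (s - 1 / 2) ^ 2 * h s := by
    filter_upwards [ae_restrict_mem measurableSet_Ioo] with s hs
    exact mul_nonneg (sq_nonneg _) (h0 s hs)
  have hge : 0 ≤ ∫ s in Ioo a b, (s - 1 / 2) ^ 2 * h s := integral_nonneg_of_ae hnn
  rcases hge.lt_or_eq with hlt | heq
  · linarith
  · exfalso
    have hz := (integral_eq_zero_iff_of_nonneg_ae hnn hi).mp heq.symm
    have hne : ∀ᵐ s ∂(volume.restrict (Ioo a b)), s ≠ 1 / 2 :=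
      ae_restrict_of_ae (Measure.ae_ne volume _)
    have : ∫ s in Ioo a b, s ^ 0 * h s = 0 := by
      refine integral_eq_zero_of_ae ?_
      filter_upwards [hz, hne] with s hs hs2
      have h2 : (s - 1 / 2) ^ 2 ≠ 0 := pow_ne_zero 2 (sub_ne_zero.mpr hs2)
      simpa [h2] using (mul_eq_zero.mp hs).resolve_left h2
    linarith

lemma tendsto_moment {a b M : ℝ} {h : ℝ → ℝ} {H : ℕ → ℝ → ℝ} {e : ℕ → ℝ}
    (ha : 0 ≤ a) (hb : b ≤ 1)
    (hc : ContinuousOn h (Ioo a b)) (hM : ∀ x ∈ Ioo a b, |h x| ≤ M)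
    (hI : ∀ n k, IntegrableOn (fun s => s ^ k * H n s) (Ioo a b))
    (he : Filter.Tendsto e Filter.atTop (nhds 0))
    (hHe : ∀ n, ∀ x ∈ Ioo a b, |H n x - h x| ≤ e n) (k : ℕ) :
    Filter.Tendsto (fun n => ∫ s in Ioo a b, s ^ k * H n s) Filter.atTop
      (nhds (∫ s in Ioo a b, s ^ k * h s)) := by
  rw [tendsto_iff_dist_tendsto_zero]
  refine squeeze_zero (g := fun n => e n * volume.real (Ioo a b)) (fun _ => dist_nonneg)
    (fun n => ?_) (by simpa using he.mul_const (volume.real (Ioo a b)))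
  rw [dist_eq_norm, ← integral_sub (hI n k) (integrableOn_pow_mul ha hb hc hM k)]
  refine norm_setIntegral_le_of_norm_le_const measure_Ioo_lt_top fun s hs => ?_
  have hs0 : 0 ≤ s := ha.trans hs.1.le
  rw [← mul_sub, norm_mul, Real.norm_eq_abs, Real.norm_eq_abs, abs_of_nonneg (pow_nonneg hs0 k)]
  calc s ^ k * |H n s - h s| ≤ 1 * |H n s - h s| :=
        mul_le_mul_of_nonneg_right (pow_le_one₀ hs0 (hs.2.le.trans hb)) (abs_nonneg _)
    _ ≤ e n := by rw [one_mul]; exact hHe n s hs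

/-- Analytic approximation preserving nonnegativity and the moments of order `0` and `1`: a nonnegative
analytic approximant is multiplied by the affine function whose coefficients solve the `2 × 2` Gram
system; these coefficients tend to `1` and `0` as the approximation improves. -/
lemma exists_analytic_same_moments {a b M η : ℝ} {h : ℝ → ℝ} (ha : 0 ≤ a)
    (hb : b ≤ 1) (hc : ContinuousOn h (Ioo a b)) (hM : ∀ x ∈ Ioo a b, |h x| ≤ M)
    (h0 : ∀ x ∈ Ioo a b, 0 ≤ h x) (m0 : ∫ s in Ioo a b, s ^ 0 * h s = 2)
    (m1 : ∫ s in Ioo a b, s ^ 1 * h s = 1) (hη : 0 < η) :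
    ∃ H : ℝ → ℝ, AnalyticOnNhd ℝ H (Ioo a b) ∧ (∀ x ∈ Ioo a b, 0 ≤ H x) ∧
      (∀ x ∈ Ioo a b, |H x - h x| ≤ η) ∧
      ∫ s in Ioo a b, s ^ 0 * H s = 2 ∧ ∫ s in Ioo a b, s ^ 1 * H s = 1 := by
  have m2 := half_lt_second_moment ha hb hc hM h0 m0 m1
  let e : ℕ → ℝ := fun n => 1 / ((n : ℝ) + 1)
  have he0 : ∀ n, 0 < e n := fun n => by positivity
  have he1 : ∀ n, e n ≤ 1 := fun n => by
    simp only [e]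
    rw [div_le_one (by positivity)]
    linarith [(Nat.cast_nonneg n : (0 : ℝ) ≤ n)]
  have hetend : Filter.Tendsto e Filter.atTop (nhds 0) := tendsto_one_div_add_atTop_nhds_zero_nat
  -- Approximating `h + e n` within `e n` keeps the approximants nonnegative.
  have hex : ∀ n, ∃ G : ℝ → ℝ, AnalyticOnNhd ℝ G (Ioo a b) ∧
      ∀ x ∈ Ioo a b, |G x - (h x + e n)| ≤ 2 * (e n / 2) := fun n =>
    exists_analytic_approx (M := M + 1) (hc.add continuousOn_const)
      (fun x hx => by
        refine (abs_add_le _ _).trans ?_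
        rw [abs_of_pos (he0 n)]
        exact add_le_add (hM x hx) (he1 n)) (half_pos (he0 n))
  choose G hGa hG using hex
  have hG' : ∀ n, ∀ x ∈ Ioo a b, 0 ≤ G n x ∧ |G n x - h x| ≤ 2 * e n := by
    intro n x hx
    have h1 := abs_le.mp (hG n x hx)
    have h2 := h0 x hx
    have h3 := he0 n
    exact ⟨by linarith, abs_le.mpr ⟨by linarith, by linarith⟩⟩
  have hGM : ∀ n, ∀ x ∈ Ioo a b, |G n x| ≤ M + 2 := by
    intro n x hx
    have h1 := abs_le.mp (hG' n x hx).2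
    rw [abs_of_nonneg (hG' n x hx).1]
    linarith [le_abs_self (h x), hM x hx, he1 n]
  have hI : ∀ n k, IntegrableOn (fun s => s ^ k * G n s) (Ioo a b) := fun n =>
    integrableOn_pow_mul ha hb (hGa n).continuousOn (hGM n)
  have he2 : Filter.Tendsto (fun n => 2 * e n) Filter.atTop (nhds 0) := by
    simpa using hetend.const_mul 2
  have ht := tendsto_moment ha hb hc hM hI he2 fun n x hx => (hG' n x hx).2
  let mu : ℕ → ℕ → ℝ := fun k n => ∫ s in Ioo a b, s ^ k * G n s
  -- `al n` and `be n` are the solution, by the Cramer rule, of the system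
  -- `α μ₀ + β μ₁ = 2`, `α μ₁ + β μ₂ = 1`.
  let det : ℕ → ℝ := fun n => mu 0 n * mu 2 n - mu 1 n ^ 2
  let al : ℕ → ℝ := fun n => (2 * mu 2 n - mu 1 n) / det n
  let be : ℕ → ℝ := fun n => (mu 0 n - 2 * mu 1 n) / det n
  have t0 : Filter.Tendsto (mu 0) Filter.atTop (nhds 2) := m0 ▸ ht 0
  have t1 : Filter.Tendsto (mu 1) Filter.atTop (nhds 1) := m1 ▸ ht 1
  have t2 : Filter.Tendsto (mu 2) Filter.atTop (nhds (∫ s in Ioo a b, s ^ 2 * h s)) := ht 2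
  set m := ∫ s in Ioo a b, s ^ 2 * h s with hm
  have hdpos : 0 < 2 * m - 1 ^ 2 := by linarith
  have td : Filter.Tendsto det Filter.atTop (nhds (2 * m - 1 ^ 2)) :=
    (t0.mul t2).sub (t1.pow 2)
  have tal : Filter.Tendsto al Filter.atTop (nhds 1) := by
    have := ((t2.const_mul 2).sub t1).div td hdpos.ne'
    rwa [one_pow, div_self (by linarith)] at this
  have tbe : Filter.Tendsto be Filter.atTop (nhds 0) := by
    have := (t0.sub (t1.const_mul 2)).div td hdpos.ne'
    rwa [mul_one, sub_self, zero_div] at this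
  have terr : Filter.Tendsto (fun n => |al n - 1| + |be n|) Filter.atTop (nhds 0) := by
    simpa using (tal.sub_const 1).abs.add tbe.abs
  have ttot : Filter.Tendsto (fun n => 2 * e n + (M + 2) * (|al n - 1| + |be n|))
      Filter.atTop (nhds 0) := by
    simpa using he2.add (terr.const_mul (M + 2))
  obtain ⟨n, hn1, hn2, hn3⟩ := ((td.eventually (lt_mem_nhds hdpos)).and
    ((terr.eventually (gt_mem_nhds one_pos)).and (ttot.eventually (gt_mem_nhds hη)))).exists
  have hfac : ∀ s ∈ Ioo a b, |(al n + be n * s) - 1| ≤ |al n - 1| + |be n| := by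
    intro s hs
    have hs0 : 0 ≤ s := ha.trans hs.1.le
    have : |be n * s| ≤ |be n| := by
      rw [abs_mul, abs_of_nonneg hs0]
      exact mul_le_of_le_one_right (abs_nonneg _) (hs.2.le.trans hb)
    calc |(al n + be n * s) - 1| = |(al n - 1) + be n * s| := by ring_nf
      _ ≤ |al n - 1| + |be n * s| := abs_add_le _ _
      _ ≤ _ := by linarith
  have hmom : ∀ k, ∫ s in Ioo a b, s ^ k * (G n s * (al n + be n * s))
      = al n * mu k n + be n * mu (k + 1) n := by
    intro k
    have e1 : ∀ s, s ^ k * (G n s * (al n + be n * s))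
        = al n * (s ^ k * G n s) + be n * (s ^ (k + 1) * G n s) := fun s => by ring
    simp only [e1]
    rw [integral_add ((hI n k).const_mul _) ((hI n (k + 1)).const_mul _), integral_const_mul,
      integral_const_mul]
  refine ⟨fun s => G n s * (al n + be n * s), ?_, ?_, ?_, ?_, ?_⟩
  · exact (hGa n).mul (analyticOnNhd_const.add (analyticOnNhd_const.mul analyticOnNhd_id))
  · intro s hs
    have := abs_le.mp (hfac s hs)
    exact mul_nonneg (hG' n s hs).1 (by linarith)
  · intro s hs
    calc |G n s * (al n + be n * s) - h s|
        = |(G n s - h s) + G n s * ((al n + be n * s) - 1)| := by ring_nf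
      _ ≤ |G n s - h s| + |G n s| * |(al n + be n * s) - 1| := by
          rw [← abs_mul]; exact abs_add_le _ _
      _ ≤ 2 * e n + (M + 2) * (|al n - 1| + |be n|) :=
          add_le_add (hG' n s hs).2 (mul_le_mul (hGM n s hs) (hfac s hs) (abs_nonneg _)
            ((abs_nonneg _).trans (hGM n s hs)))
      _ ≤ η := hn3.le
  · rw [hmom 0]
    have hd : det n ≠ 0 := hn1.ne'
    simp only [al, be, zero_add]
    field_simp
    simp only [det]
    ring
  · rw [hmom 1]
    have hd : det n ≠ 0 := hn1.ne'
    simp only [al, be, one_add_one_eq_two]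
    field_simp
    simp only [det]
    ring

/-- signals with real-analytic densities are dense in F^∞ (sup-norm). -/
theorem analytic_signals_dense
    (slo shi : ℝ) (hslo : 0 ≤ slo) (hss : slo < shi) (hshi : shi ≤ 1)
    (f : ℝ → ℝ) (hf : f ∈ Fclass slo shi) (ε : ℝ) (hε : 0 < ε) :
    ∃ g ∈ Fclass slo shi, AnalyticOnNhd ℝ g (Ioo slo shi) ∧ supDist slo shi f g < ε := by
  obtain ⟨hfc, hf0, hf1, hf2, ⟨M₁, hM₁⟩, ⟨M₂, hM₂⟩⟩ := hf
  have hpos : ∀ s ∈ Ioo slo shi, 0 < s := fun s hs => hslo.trans_lt hs.1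
  rw [intervalIntegral.integral_of_le hss.le, integral_Ioc_eq_integral_Ioo] at hf1 hf2
  -- In terms of `h = f / s`, the two integral constraints read `∫ h = 2` and `∫ s h = 1`, and the two
  -- boundedness conditions amount to boundedness of `h`.
  let h : ℝ → ℝ := fun s => f s / s
  have hhc : ContinuousOn h (Ioo slo shi) :=
    hfc.div continuousOn_id fun s hs => (hpos s hs).ne'
  have hhM : ∀ s ∈ Ioo slo shi, |h s| ≤ M₂ + M₁ := by
    intro s hs
    have hs0 := (hpos s hs).ne'
    have e : h s = f s * (1 - s) / s + f s := by
      simp only [h]; field_simp; ring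
    rw [e]
    exact (abs_add_le _ _).trans (add_le_add (hM₂ s hs) (hM₁ s hs))
  have hh0 : ∀ s ∈ Ioo slo shi, 0 ≤ h s := fun s hs => div_nonneg (hf0 s hs) (hpos s hs).le
  have I := integrableOn_pow_mul hslo hshi hhc hhM
  have m1 : ∫ s in Ioo slo shi, s ^ 1 * h s = 1 := by
    rw [← hf1]
    refine setIntegral_congr_fun measurableSet_Ioo fun s hs => ?_
    have hs0 := (hpos s hs).ne'
    simp only [h]; field_simp
  have m0 : ∫ s in Ioo slo shi, s ^ 0 * h s = 2 := by
    have e : ∫ s in Ioo slo shi, f s * (1 - 2 * s) / s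
        = ∫ s in Ioo slo shi, (s ^ 0 * h s - 2 * (s ^ 1 * h s)) := by
      refine setIntegral_congr_fun measurableSet_Ioo fun s hs => ?_
      have hs0 := (hpos s hs).ne'
      simp only [h]; field_simp
    rw [e, integral_sub (I 0) ((I 1).const_mul 2), integral_const_mul, m1] at hf2
    linarith
  obtain ⟨H, hHa, hH0, hHh, k0, k1⟩ :=
    exists_analytic_same_moments hslo hshi hhc hhM hh0 m0 m1 (half_pos hε)
  have hHM : ∀ s ∈ Ioo slo shi, |H s| ≤ M₂ + M₁ + ε / 2 := by
    intro s hs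
    have := abs_sub_abs_le_abs_sub (H s) (h s)
    linarith [hHh s hs, hhM s hs]
  have J := integrableOn_pow_mul hslo hshi hHa.continuousOn hHM
  have hga : AnalyticOnNhd ℝ (fun s => s * H s) (Ioo slo shi) := analyticOnNhd_id.mul hHa
  refine ⟨fun s => s * H s, ⟨hga.continuousOn, fun s hs => mul_nonneg (hpos s hs).le (hH0 s hs),
    ?_, ?_, ⟨M₂ + M₁ + ε / 2, ?_⟩, ⟨M₂ + M₁ + ε / 2, ?_⟩⟩, hga, ?_⟩
  · rw [intervalIntegral.integral_of_le hss.le, integral_Ioc_eq_integral_Ioo, ← k1]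
    simp only [pow_one]
  · rw [intervalIntegral.integral_of_le hss.le, integral_Ioc_eq_integral_Ioo]
    have e : ∫ s in Ioo slo shi, s * H s * (1 - 2 * s) / s
        = ∫ s in Ioo slo shi, (s ^ 0 * H s - 2 * (s ^ 1 * H s)) := by
      refine setIntegral_congr_fun measurableSet_Ioo fun s hs => ?_
      have hs0 := (hpos s hs).ne'
      field_simp
    rw [e, integral_sub (J 0) ((J 1).const_mul 2), integral_const_mul, k0, k1]
    norm_num
  · intro s hs
    rw [abs_mul, abs_of_pos (hpos s hs)]
    exact (mul_le_of_le_one_left (abs_nonneg _) (hs.2.le.trans hshi)).trans (hHM s hs)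
  · intro s hs
    have hs0 := (hpos s hs).ne'
    have e : s * H s * (1 - s) / s = (1 - s) * H s := by field_simp
    rw [e, abs_mul, abs_of_nonneg (by linarith [hs.2])]
    exact (mul_le_of_le_one_left (abs_nonneg _) (by linarith [hpos s hs])).trans (hHM s hs)
  · have : Nonempty (Ioo slo shi) := (nonempty_Ioo.mpr hss).to_subtype
    refine lt_of_le_of_lt (ciSup_le fun s => ?_) (half_lt_self hε)
    obtain ⟨s, hs⟩ := s
    have hs0 := (hpos s hs).ne'
    have e : f s - s * H s = s * (h s - H s) := by
      simp only [h]; field_simp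
    change |f s - s * H s| ≤ ε / 2
    rw [e, abs_mul, abs_of_pos (hpos s hs), abs_sub_comm]
    exact (mul_le_of_le_one_left (abs_nonneg _) (hs.2.le.trans hshi)).trans (hHh s hs)
end
end

section
/- Assume 0 < s̲ < s̄ < 1, E₀ ≠ ∅, and fix ε₀ > 0 such that C_{ε₀} ≠ ∅, and n ∈ ℕ, n ≥ 1. Let f ∈ F^∞ be real-analytic on (s̲,s̄), suppose that λ ↦ G_f(λ,0) is not identically zero on E₀, and suppose that for every λ ∈ closure(E₀) with G_f(λ,0) = 0 the map c ↦ G_f(λ,c) is not identically zero on the interior of M_λ = {c ∈ C_{ε₀} : m(λ,c) ∈ [s̲,s̄] and mm(λ,c) ∈ [s̲,s̄]}. Then f does not belong to the closure (in the sup-norm metric on F^∞) of F_n = {g ∈ F^∞ : the Lebesgue measure of {c ∈ C_{ε₀} : ∃ λ ∈ E₀ ∩ E_c, G_g(λ,0) = G_g(λ,c) = 0} is at least 1/n}. -/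
/-!
The sets `statSet g`, for `g` close to `f`, lie in the sets `B_δ` of shocks `c` for which some
`lam` in the closure of `E₀` satisfies `|G_f(lam, 0)| ≤ δ` and `|G_f(lam, c)| ≤ δ`
(`statSet_subset_of_close`), because `G` depends continuously on the signal. Each `B_δ` is the
projection of a compact set (`isCompact_Kapprox`). If `f` were in the closure of `Fn`, every `B_δ`
would have measure at least `1/n` within `Ceps`, hence so would their intersection as `δ → 0`; by
compactness this intersection is the set of `c` for which some `lam` in the closure of `E₀`
satisfies `G_f(lam, 0) = G_f(lam, c) = 0`.

Within `Ceps` that set is countable, which is the contradiction. Since `f` is analytic,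
`lam ↦ G_f(lam, 0)` and `c ↦ G_f(lam, c)` have analytic derivatives on the intervals where the
cutoffs are interior (`countable_zeros_integral`), so the nondegeneracy hypotheses leave only
countably many zeros `lam` (`countable_zeros_lam`), and for each of them only countably many `c`
(`countable_zeros_shock`). Although `Ceps` omits `0`, the functions extend analytically across
`c = 0` whenever both sides of `0` matter, so one nonzero value suffices for both sides.
-/

open Set MeasureTheory
open scoped ENNReal

noncomputable section

/-! ### Countability of zero sets -/

/-- A subset of the line all of whose points are isolated in it is countable. -/
lemma countable_of_forall_isolated {S : Set ℝ}
    (h : ∀ x ∈ S, ∀ᶠ z in nhdsWithin x {x}ᶜ, z ∉ S) : S.Countable := by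
  refine Set.Countable.mono ?_ (countable_setOfPred_isolated_right_within (s := S))
  refine fun x hx => ⟨hx, ?_⟩
  rw [← Filter.empty_mem_iff_bot]
  have h1 : ∀ᶠ z in nhdsWithin x (S ∩ Ioi x), z ∉ S :=
    (h x hx).filter_mono (nhdsWithin_mono x fun z hz => ne_of_gt hz.2)
  filter_upwards [h1, self_mem_nhdsWithin] with z hz hz'
  exact hz hz'.1

/-- A function with analytic derivative on an interval, not identically zero there, has countably
many zeros. A zero at which the derivative does not vanish is isolated, and the zeros of the
derivative are isolated unless the function is constant. -/
lemma countable_zeros_of_analytic_deriv {F F' : ℝ → ℝ} {U : Set ℝ} (hU : U.OrdConnected)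
    (hd : ∀ x ∈ U, HasDerivAt F (F' x) x) (ha : AnalyticOnNhd ℝ F' U)
    (h0 : ∃ x ∈ U, F x ≠ 0) : {x ∈ U | F x = 0}.Countable := by
  by_cases hz : EqOn F' 0 U
  · obtain ⟨y, hy, hFy⟩ := h0
    have hconst : ∀ x ∈ U, F x = F y := by
      intro x hx
      have hb := hU.convex.norm_image_sub_le_of_norm_hasDerivWithin_le (C := 0)
        (fun z hz' => (hd z hz').hasDerivWithinAt) (fun z hz' => by simp [hz hz']) hy hx
      simpa [sub_eq_zero] using hb
    have : {x ∈ U | F x = 0} = ∅ := by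
      ext x
      simp only [mem_ofPred_eq, mem_empty_iff_false, iff_false, not_and]
      intro hx hFx
      exact hFy (hconst x hx ▸ hFx)
    rw [this]
    exact countable_empty
  · have h1 : {x ∈ U | F' x = 0}.Countable := by
      refine countable_of_forall_isolated fun x hx => ?_
      by_contra hcon
      refine hz (ha.eqOn_zero_of_preconnected_of_frequently_eq_zero hU.isPreconnected hx.1 ?_)
      refine fun hne => hcon ?_
      filter_upwards [hne] with z hz1 hz2
      exact hz1 hz2.2
    have h2 : {x ∈ U | F x = 0 ∧ F' x ≠ 0}.Countable := by
      refine countable_of_forall_isolated fun x hx => ?_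
      filter_upwards [(hd x hx.1).eventually_ne (c := 0) hx.2.2] with z hz1 hz2
      exact hz1 hz2.2.1
    refine (h1.union h2).mono fun x hx => ?_
    by_cases hx' : F' x = 0
    · exact Or.inl ⟨hx.1, hx'⟩
    · exact Or.inr ⟨hx.1, hx.2, hx'⟩

/-! ### The integrand of `Gfun` -/

/-- The integrand `s ↦ f s * (1 - 2 * s) / s` of `Gfun`, called the weight below, is continuous. -/
lemma continuousOn_weight {slo shi : ℝ} {f : ℝ → ℝ} (hslo : 0 < slo)
    (hf : f ∈ Fclass slo shi) : ContinuousOn (fun s => f s * (1 - 2 * s) / s) (Ioo slo shi) := by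
  refine ContinuousOn.div (hf.1.mul (by fun_prop)) continuousOn_id fun s hs => ?_
  have := hs.1
  exact ne_of_gt (show (0:ℝ) < s by linarith)

lemma abs_weight_le {slo shi s y M : ℝ} (hslo : 0 < slo) (hshi : shi < 1) (hs : s ∈ Ioo slo shi)
    (hy : |y| ≤ M) : |y * (1 - 2 * s) / s| ≤ M / slo := by
  have hs0 : 0 < s := hslo.trans hs.1
  have hs1 : s < 1 := hs.2.trans hshi
  have hM : 0 ≤ M := (abs_nonneg y).trans hy
  rw [abs_div, abs_mul, abs_of_pos hs0]
  have h1 : |1 - 2 * s| ≤ 1 := by rw [abs_le]; constructor <;> linarith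
  have h2 : |y| * |1 - 2 * s| ≤ M := by
    calc |y| * |1 - 2 * s| ≤ M * 1 := by gcongr
      _ = M := mul_one M
  exact div_le_div₀ hM h2 hslo hs.1.le

lemma intervalIntegrable_weight {slo shi : ℝ} {f : ℝ → ℝ} (hslo : 0 < slo) (hss : slo < shi)
    (hshi : shi < 1) (hf : f ∈ Fclass slo shi) :
    IntervalIntegrable (fun s => f s * (1 - 2 * s) / s) volume slo shi := by
  rw [intervalIntegrable_iff_integrableOn_Ioo_of_le hss.le]
  obtain ⟨M, hM⟩ := hf.2.2.2.2.1
  refine Integrable.of_bound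
    ((continuousOn_weight hslo hf).aestronglyMeasurable measurableSet_Ioo) (M / slo) ?_
  filter_upwards [ae_restrict_mem measurableSet_Ioo] with s hs
  exact abs_weight_le hslo hshi hs (hM s hs)

/-- The expression defining `Gfun`, with arbitrary analytic interior cutoffs `a` and `b` of one
real variable: its zero set is countable unless it vanishes identically. By the fundamental theorem
of calculus its derivative is analytic. One statement serves both for `lam ↦ G(lam, 0)` and for
`c ↦ G(lam, c)`. -/
lemma countable_zeros_integral {p slo shi : ℝ} {f a b : ℝ → ℝ} {U : Set ℝ}
    (hslo : 0 < slo) (hss : slo < shi) (hshi : shi < 1) (hf : f ∈ Fclass slo shi)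
    (hfa : AnalyticOnNhd ℝ f (Ioo slo shi)) (hU : U.OrdConnected)
    (ha : AnalyticOnNhd ℝ a U) (hb : AnalyticOnNhd ℝ b U)
    (ham : MapsTo a U (Ioo slo shi)) (hbm : MapsTo b U (Ioo slo shi))
    (h0 : ∃ x ∈ U, p * (∫ s in slo..(a x), f s * (1 - 2 * s) / s)
      + (1 - p) * (∫ s in (b x)..shi, f s * (1 - 2 * s) / s) ≠ 0) :
    {x ∈ U | p * (∫ s in slo..(a x), f s * (1 - 2 * s) / s)
      + (1 - p) * (∫ s in (b x)..shi, f s * (1 - 2 * s) / s) = 0}.Countable := by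
  set h : ℝ → ℝ := fun s => f s * (1 - 2 * s) / s with hh
  have hcont : ContinuousOn h (Ioo slo shi) := continuousOn_weight hslo hf
  have hint : IntervalIntegrable h volume slo shi := intervalIntegrable_weight hslo hss hshi hf
  have hana : AnalyticOnNhd ℝ h (Ioo slo shi) := by
    refine (hfa.mul (analyticOnNhd_const.sub (analyticOnNhd_const.mul analyticOnNhd_id))).div
      analyticOnNhd_id fun s hs => ?_
    exact ne_of_gt (hslo.trans hs.1)
  have hsub : ∀ y ∈ uIcc slo shi, ∀ z ∈ uIcc slo shi,
      IntervalIntegrable h volume y z := fun y hy z hz =>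
    hint.mono_set (uIcc_subset_uIcc hy hz)
  have hmem : ∀ x ∈ Ioo slo shi, x ∈ uIcc slo shi := fun x hx => by
    rw [uIcc_of_le hss.le]; exact Ioo_subset_Icc_self hx
  have hR : ∀ x ∈ Ioo slo shi, HasDerivAt (fun y => ∫ s in slo..y, h s) (h x) x := fun x hx =>
    intervalIntegral.integral_hasDerivAt_right (hsub _ left_mem_uIcc _ (hmem x hx))
      (hcont.stronglyMeasurableAtFilter isOpen_Ioo x hx) (hcont.continuousAt (Ioo_mem_nhds hx.1 hx.2))
  have hL : ∀ x ∈ Ioo slo shi, HasDerivAt (fun y => ∫ s in y..shi, h s) (-h x) x := fun x hx =>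
    intervalIntegral.integral_hasDerivAt_left (hsub _ (hmem x hx) _ right_mem_uIcc)
      (hcont.stronglyMeasurableAtFilter isOpen_Ioo x hx) (hcont.continuousAt (Ioo_mem_nhds hx.1 hx.2))
  refine countable_zeros_of_analytic_deriv
    (F' := fun x => p * (h (a x) * deriv a x) + (1 - p) * (-h (b x) * deriv b x)) hU ?_ ?_ h0
  · intro x hx
    have h1 := (hR (a x) (ham hx)).comp x (ha x hx).differentiableAt.hasDerivAt
    have h2 := (hL (b x) (hbm hx)).comp x (hb x hx).differentiableAt.hasDerivAt
    exact (h1.const_mul p).add (h2.const_mul (1 - p))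
  · have h1 : AnalyticOnNhd ℝ (fun x => h (a x)) U := hana.comp ha ham
    have h2 : AnalyticOnNhd ℝ (fun x => h (b x)) U := hana.comp hb hbm
    exact (analyticOnNhd_const.mul (h1.mul ha.deriv)).add
      (analyticOnNhd_const.mul (h2.neg.mul hb.deriv))

/-! ### The cutoffs and the interval `E₀` -/

lemma lt_div_add_iff {s A B : ℝ} (hs : s < 1) (hA : 0 < A) (hB : 0 < B) :
    s < A / (A + B) ↔ B * (s / (1 - s)) < A := by
  have h1 : 0 < 1 - s := by linarith
  rw [lt_div_iff₀ (by positivity), ← mul_div_assoc, div_lt_iff₀ h1]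
  constructor <;> intro h <;> nlinarith

lemma div_add_lt_iff {s A B : ℝ} (hs : s < 1) (hA : 0 < A) (hB : 0 < B) :
    A / (A + B) < s ↔ A < B * (s / (1 - s)) := by
  have h1 : 0 < 1 - s := by linarith
  rw [div_lt_iff₀ (by positivity), ← mul_div_assoc, lt_div_iff₀ h1]
  constructor <;> intro h <;> nlinarith

lemma div_add_mem_Ioo_iff {slo shi A B : ℝ} (hss : slo < shi) (hshi : shi < 1)
    (hA : 0 < A) (hB : 0 < B) :
    A / (A + B) ∈ Ioo slo shi ↔ A ∈ Ioo (B * (slo / (1 - slo))) (B * (shi / (1 - shi))) := by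
  rw [mem_Ioo, mem_Ioo, lt_div_add_iff (hss.trans hshi) hA hB, div_add_lt_iff hshi hA hB]

lemma div_add_mem_Icc_iff {slo shi A B : ℝ} (hss : slo < shi) (hshi : shi < 1)
    (hA : 0 < A) (hB : 0 < B) :
    A / (A + B) ∈ Icc slo shi ↔ A ∈ Icc (B * (slo / (1 - slo))) (B * (shi / (1 - shi))) := by
  rw [mem_Icc, mem_Icc, ← not_lt, ← not_lt, lt_div_add_iff hshi hA hB,
    div_add_lt_iff (hss.trans hshi) hA hB, not_lt, not_lt]

lemma mcut_zero (u lam : ℝ) : mcut u lam 0 = lam / (lam + u) := by simp [mcut]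

lemma mmcut_zero (v lam : ℝ) : mmcut v lam 0 = lam / (lam + v) := by simp [mmcut]

/-- Lower end of the interval `E₀`. -/
def E0lo (u v slo : ℝ) : ℝ := max (u * (slo / (1 - slo))) (v * (slo / (1 - slo)))

/-- Upper end of the interval `E₀`. -/
def E0hi (u v shi : ℝ) : ℝ := min (u * (shi / (1 - shi))) (v * (shi / (1 - shi)))

lemma E0lo_pos {u v slo : ℝ} (hu : 0 < u) (hslo : 0 < slo) (h1 : slo < 1) : 0 < E0lo u v slo := by
  have : 0 < 1 - slo := by linarith
  exact lt_max_of_lt_left (by positivity)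

lemma Econf_zero_eq {u v slo shi : ℝ} (hu : 0 < u) (hv : 0 < v) (hslo : 0 < slo)
    (hss : slo < shi) (hshi : shi < 1) :
    Econf u v slo shi 0 = Ioo (E0lo u v slo) (E0hi u v shi) := by
  ext lam
  have key : 0 < lam → ((mcut u lam 0 ∈ Ioo slo shi ∧ mmcut v lam 0 ∈ Ioo slo shi) ↔
      lam ∈ Ioo (E0lo u v slo) (E0hi u v shi)) := by
    intro hlam
    rw [mcut_zero, mmcut_zero, div_add_mem_Ioo_iff hss hshi hlam hu,
      div_add_mem_Ioo_iff hss hshi hlam hv, E0lo, E0hi]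
    simp only [mem_Ioo, max_lt_iff, lt_min_iff]
    tauto
  constructor
  · rintro ⟨h0, h⟩
    exact (key h0).1 h
  · intro h
    have h0 : 0 < lam := (E0lo_pos hu hslo (hss.trans hshi)).trans h.1
    exact ⟨h0, (key h0).2 h⟩

lemma cut_zero_mem_Icc {u v slo shi lam : ℝ} (hu : 0 < u) (hv : 0 < v) (hslo : 0 < slo)
    (hss : slo < shi) (hshi : shi < 1) (h : lam ∈ Icc (E0lo u v slo) (E0hi u v shi)) :
    mcut u lam 0 ∈ Icc slo shi ∧ mmcut v lam 0 ∈ Icc slo shi := by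
  have h0 : 0 < lam := (E0lo_pos hu hslo (hss.trans hshi)).trans_le h.1
  rw [mcut_zero, mmcut_zero, div_add_mem_Icc_iff hss hshi h0 hu, div_add_mem_Icc_iff hss hshi h0 hv]
  simp only [E0lo, E0hi, mem_Icc, max_le_iff, le_min_iff] at h ⊢
  tauto

lemma mcut_strictMonoOn {u lam : ℝ} (hlam : 0 < lam) :
    StrictMonoOn (mcut u lam) (Ioo (-1) u) := by
  intro c hc d hd hcd
  have h1 : 0 < 1 + c := by linarith [hc.1]
  have h2 : 0 < 1 + d := by linarith [hd.1]
  have h3 : 0 < u - c := by linarith [hc.2]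
  have h4 : 0 < u - d := by linarith [hd.2]
  unfold mcut
  rw [div_lt_div_iff₀ (by positivity) (by positivity)]
  have : 0 < lam * ((d - c) * (u + 1)) :=
    mul_pos hlam (mul_pos (by linarith) (by linarith))
  nlinarith

lemma mmcut_strictAntiOn {v lam : ℝ} (hlam : 0 < lam) :
    StrictAntiOn (mmcut v lam) (Ioo (-v) 1) := by
  intro c hc d hd hcd
  have h1 : 0 < 1 - c := by linarith [hc.2]
  have h2 : 0 < 1 - d := by linarith [hd.2]
  have h3 : 0 < v + c := by linarith [hc.1]
  have h4 : 0 < v + d := by linarith [hd.1]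
  unfold mmcut
  rw [div_lt_div_iff₀ (by positivity) (by positivity)]
  have : 0 < lam * ((d - c) * (v + 1)) :=
    mul_pos hlam (mul_pos (by linarith) (by linarith))
  nlinarith

lemma mcut_den_pos {u lam c : ℝ} (hlam : 0 < lam) (hc : c ∈ Ioo (-1) u) :
    0 < lam * (1 + c) + (u - c) := by
  have h1 : 0 < 1 + c := by linarith [hc.1]
  have h3 : 0 < u - c := by linarith [hc.2]
  positivity

lemma mmcut_den_pos {v lam c : ℝ} (hlam : 0 < lam) (hc : c ∈ Ioo (-v) 1) :
    0 < lam * (1 - c) + (v + c) := by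
  have h1 : 0 < 1 - c := by linarith [hc.2]
  have h3 : 0 < v + c := by linarith [hc.1]
  positivity

/-! ### Continuity of `Gfun` in the cutoffs and in the signal -/

lemma continuousOn_Gfun {X : Type*} [TopologicalSpace X] {K : Set X} {l c : X → ℝ}
    {p u v slo shi : ℝ} {f : ℝ → ℝ}
    (hslo : 0 < slo) (hss : slo < shi) (hshi : shi < 1) (hf : f ∈ Fclass slo shi)
    (hm : ContinuousOn (fun x => mcut u (l x) (c x)) K)
    (hmm : ContinuousOn (fun x => mmcut v (l x) (c x)) K)
    (hmK : ∀ x ∈ K, mcut u (l x) (c x) ∈ Icc slo shi)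
    (hmmK : ∀ x ∈ K, mmcut v (l x) (c x) ∈ Icc slo shi) :
    ContinuousOn (fun x => Gfun p u v slo shi f (l x) (c x)) K := by
  have hint := intervalIntegrable_weight hslo hss hshi hf
  have hIcc : IntegrableOn (fun s => f s * (1 - 2 * s) / s) (uIcc slo shi) := by
    rw [uIcc_of_le hss.le]
    exact (intervalIntegrable_iff_integrableOn_Icc_of_le hss.le).1 hint
  have h1 := intervalIntegral.continuousOn_primitive_interval hIcc
  have h2 := intervalIntegral.continuousOn_primitive_interval_left hIcc
  rw [uIcc_of_le hss.le] at h1 h2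
  exact (continuousOn_const.mul (h1.comp hm hmK)).add (continuousOn_const.mul (h2.comp hmm hmmK))

lemma abs_Gfun_sub_le {p u v slo shi ε lam c : ℝ} {f g : ℝ → ℝ} (hp : p ∈ Ioo (0:ℝ) 1)
    (hslo : 0 < slo) (hss : slo < shi) (hshi : shi < 1) (hf : f ∈ Fclass slo shi)
    (hg : g ∈ Fclass slo shi) (hfg : ∀ s ∈ Ioo slo shi, |f s - g s| ≤ ε)
    (hm : mcut u lam c ∈ Icc slo shi) (hmm : mmcut v lam c ∈ Icc slo shi) :
    |Gfun p u v slo shi f lam c - Gfun p u v slo shi g lam c| ≤ ε / slo := by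
  have key : ∀ x y, slo ≤ x → x ≤ y → y ≤ shi →
      |(∫ s in x..y, f s * (1 - 2 * s) / s) - ∫ s in x..y, g s * (1 - 2 * s) / s| ≤ ε / slo := by
    intro x y hx hxy hy
    have hε : 0 ≤ ε := by
      obtain ⟨s, hs⟩ := nonempty_Ioo.2 hss
      exact (abs_nonneg _).trans (hfg s hs)
    have hsub : uIcc x y ⊆ uIcc slo shi := by
      rw [uIcc_of_le hss.le, uIcc_of_le hxy]
      exact Icc_subset_Icc hx hy
    rw [← intervalIntegral.integral_sub
      ((intervalIntegrable_weight hslo hss hshi hf).mono_set hsub)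
      ((intervalIntegrable_weight hslo hss hshi hg).mono_set hsub)]
    have hb := intervalIntegral.norm_integral_le_of_norm_le_const_ae (a := x) (b := y)
      (f := fun s => f s * (1 - 2 * s) / s - g s * (1 - 2 * s) / s) (C := ε / slo) (by
        -- The bound on `f - g` says nothing at the endpoint `shi`, which is a null set.
        have hne : ∀ᵐ s : ℝ, s ≠ shi := by simp [ae_iff]
        filter_upwards [hne] with s hs hs'
        rw [uIoc_of_le hxy] at hs'
        have hsI : s ∈ Ioo slo shi :=
          ⟨lt_of_le_of_lt hx hs'.1, lt_of_le_of_ne (hs'.2.trans hy) hs⟩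
        have := abs_weight_le hslo hshi hsI (hfg s hsI)
        rw [Real.norm_eq_abs]
        convert this using 2
        ring)
    refine hb.trans ?_
    have : |y - x| ≤ 1 := by rw [abs_le]; constructor <;> linarith
    have h0 : 0 ≤ ε / slo := by positivity
    nlinarith
  have h1 := key slo _ le_rfl hm.1 hm.2
  have h2 := key _ shi hmm.1 hmm.2 le_rfl
  have hp0 := hp.1
  have hp1 := hp.2
  unfold Gfun
  rw [abs_le] at *
  constructor <;> nlinarith

/-- Boundedness of the signals makes the supremum in `supDist` a genuine one. -/
lemma abs_sub_le_of_supDist_lt {slo shi ε : ℝ} {f g : ℝ → ℝ} (hf : f ∈ Fclass slo shi)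
    (hg : g ∈ Fclass slo shi) (h : supDist slo shi f g < ε) :
    ∀ s ∈ Ioo slo shi, |f s - g s| ≤ ε := by
  obtain ⟨M, hM⟩ := hf.2.2.2.2.1
  obtain ⟨N, hN⟩ := hg.2.2.2.2.1
  intro s hs
  have hbdd : BddAbove (range fun s : Ioo slo shi => |f s.1 - g s.1|) := by
    refine ⟨M + N, ?_⟩
    rintro _ ⟨t, rfl⟩
    exact (abs_sub _ _).trans (add_le_add (hM t t.2) (hN t t.2))
  exact (le_ciSup hbdd ⟨s, hs⟩).trans h.le

/-! ### Zeros in the shock and in `lam` -/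

/-- For fixed `lam`, the shocks admissible for `e0` at which both cutoffs are interior.
Unlike `Mset` it may contain `0`, which makes it an interval. -/
def Jset (u v slo shi e0 lam : ℝ) : Set ℝ :=
  {c | c ∈ Ioo (-1 + e0) (u - e0) ∩ Ioo (-v + e0) (1 - e0) ∧
    mcut u lam c ∈ Ioo slo shi ∧ mmcut v lam c ∈ Ioo slo shi}

lemma Ioo_shrink {a b e c : ℝ} (he : 0 < e) (hc : c ∈ Icc (a + e) (b - e)) : c ∈ Ioo a b :=
  ⟨by linarith [hc.1], by linarith [hc.2]⟩

lemma Jset_ordConnected {u v slo shi e0 lam : ℝ} (he0 : 0 < e0) (hlam : 0 < lam) :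
    (Jset u v slo shi e0 lam).OrdConnected := by
  refine ⟨?_⟩
  rintro c ⟨⟨hc1, hc2⟩, hc3, hc4⟩ d ⟨⟨hd1, hd2⟩, hd3, hd4⟩ x hx
  have hx1 : x ∈ Ioo (-1 + e0) (u - e0) := ordConnected_Ioo.out hc1 hd1 hx
  have hx2 : x ∈ Ioo (-v + e0) (1 - e0) := ordConnected_Ioo.out hc2 hd2 hx
  have hM := (mcut_strictMonoOn (u := u) hlam).monotoneOn
  have hA := (mmcut_strictAntiOn (v := v) hlam).antitoneOn
  have s1 : ∀ {y}, y ∈ Ioo (-1 + e0) (u - e0) → y ∈ Ioo (-1) u :=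
    fun h => Ioo_shrink he0 (Ioo_subset_Icc_self h)
  have s2 : ∀ {y}, y ∈ Ioo (-v + e0) (1 - e0) → y ∈ Ioo (-v) 1 :=
    fun h => Ioo_shrink he0 (Ioo_subset_Icc_self h)
  exact ⟨⟨hx1, hx2⟩,
    ordConnected_Ioo.out hc3 hd3 ⟨hM (s1 hc1) (s1 hx1) hx.1, hM (s1 hx1) (s1 hd1) hx.2⟩,
    ordConnected_Ioo.out hd4 hc4 ⟨hA (s2 hx2) (s2 hd2) hx.2, hA (s2 hc2) (s2 hx2) hx.1⟩⟩

/-- The cutoffs are strictly monotone in the shock, so they cannot reach the ends of the signal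
range at an interior point of `Mset`. -/
lemma interior_Mset_subset_Jset {u v slo shi e0 lam : ℝ} (he0 : 0 < e0) (hlam : 0 < lam) :
    interior (Mset u v slo shi e0 lam) ⊆ Jset u v slo shi e0 lam := by
  intro c hc
  obtain ⟨r, hr, hball⟩ := Metric.isOpen_iff.1 isOpen_interior c hc
  have hM : ∀ x ∈ Metric.ball c r, x ∈ Mset u v slo shi e0 lam :=
    fun x hx => interior_subset (hball hx)
  have hcM := hM c (Metric.mem_ball_self hr)
  have haM := hM (c - r / 2) (by rw [Metric.mem_ball, Real.dist_eq, abs_lt]; constructor <;> linarith)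
  have hbM := hM (c + r / 2) (by rw [Metric.mem_ball, Real.dist_eq, abs_lt]; constructor <;> linarith)
  have s1 : ∀ {y}, y ∈ Mset u v slo shi e0 lam → y ∈ Ioo (-1) u :=
    fun h => Ioo_shrink he0 (Ioo_subset_Icc_self h.1.1.2)
  have s2 : ∀ {y}, y ∈ Mset u v slo shi e0 lam → y ∈ Ioo (-v) 1 :=
    fun h => Ioo_shrink he0 (Ioo_subset_Icc_self h.1.2)
  have hmono := mcut_strictMonoOn (u := u) hlam
  have hanti := mmcut_strictAntiOn (v := v) hlam
  have hac : c - r / 2 < c := by linarith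
  have hcb : c < c + r / 2 := by linarith
  exact ⟨⟨hcM.1.1.2, hcM.1.2⟩,
    ⟨haM.2.1.1.trans_lt (hmono (s1 haM) (s1 hcM) hac),
      (hmono (s1 hcM) (s1 hbM) hcb).trans_le hbM.2.1.2⟩,
    ⟨hbM.2.2.1.trans_lt (hanti (s2 hcM) (s2 hbM) hcb),
      (hanti (s2 haM) (s2 hcM) hac).trans_le haM.2.2.2⟩⟩

lemma countable_inter_fiber {φ : ℝ → ℝ} {D : Set ℝ} (h : InjOn φ D) (y : ℝ) :
    {c ∈ D | φ c = y}.Countable :=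
  Set.Subsingleton.countable fun _ ha _ hb => h ha.1 hb.1 (ha.2.trans hb.2.symm)

/-- Analyticity gives countability on `Jset`; on the rest of `Mset` a cutoff equals an end of the
signal range, which happens for at most four shocks. -/
lemma countable_zeros_shock {p u v slo shi e0 lam : ℝ} {f : ℝ → ℝ}
    (hslo : 0 < slo) (hss : slo < shi) (hshi : shi < 1) (he0 : 0 < e0) (hlam : 0 < lam)
    (hf : f ∈ Fclass slo shi) (hfa : AnalyticOnNhd ℝ f (Ioo slo shi))
    (h : ¬ ∀ c ∈ interior (Mset u v slo shi e0 lam), Gfun p u v slo shi f lam c = 0) :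
    {c ∈ Mset u v slo shi e0 lam | Gfun p u v slo shi f lam c = 0}.Countable := by
  have s1 : ∀ {y}, y ∈ Ioo (-1 + e0) (u - e0) → y ∈ Ioo (-1) u :=
    fun h => Ioo_shrink he0 (Ioo_subset_Icc_self h)
  have s2 : ∀ {y}, y ∈ Ioo (-v + e0) (1 - e0) → y ∈ Ioo (-v) 1 :=
    fun h => Ioo_shrink he0 (Ioo_subset_Icc_self h)
  have hJ : {c ∈ Jset u v slo shi e0 lam | Gfun p u v slo shi f lam c = 0}.Countable := by
    refine countable_zeros_integral (a := mcut u lam) (b := mmcut v lam) hslo hss hshi hf hfa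
      (Jset_ordConnected he0 hlam) ?_ ?_ (fun c hc => hc.2.1) (fun c hc => hc.2.2) ?_
    · intro c hc
      have := (mcut_den_pos hlam (s1 hc.1.1)).ne'
      unfold mcut
      fun_prop (disch := assumption)
    · intro c hc
      have := (mmcut_den_pos hlam (s2 hc.1.2)).ne'
      unfold mmcut
      fun_prop (disch := assumption)
    · push Not at h
      obtain ⟨c, hc, hGc⟩ := h
      exact ⟨c, interior_Mset_subset_Jset he0 hlam hc, hGc⟩
  have hI := (mcut_strictMonoOn (u := u) hlam).injOn
  have hI' := (mmcut_strictAntiOn (v := v) hlam).injOn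
  refine (hJ.union (((countable_inter_fiber hI slo).union (countable_inter_fiber hI shi)).union
    ((countable_inter_fiber hI' slo).union (countable_inter_fiber hI' shi)))).mono ?_
  rintro c ⟨⟨hcC, hm, hmm⟩, hG⟩
  have hc1 := s1 hcC.1.2
  have hc2 := s2 hcC.2
  by_cases e1 : mcut u lam c = slo
  · exact Or.inr (Or.inl (Or.inl ⟨hc1, e1⟩))
  by_cases e2 : mcut u lam c = shi
  · exact Or.inr (Or.inl (Or.inr ⟨hc1, e2⟩))
  by_cases e3 : mmcut v lam c = slo
  · exact Or.inr (Or.inr (Or.inl ⟨hc2, e3⟩))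
  by_cases e4 : mmcut v lam c = shi
  · exact Or.inr (Or.inr (Or.inr ⟨hc2, e4⟩))
  exact Or.inl ⟨⟨⟨hcC.1.2, hcC.2⟩,
    ⟨lt_of_le_of_ne hm.1 (Ne.symm e1), lt_of_le_of_ne hm.2 e2⟩,
    ⟨lt_of_le_of_ne hmm.1 (Ne.symm e3), lt_of_le_of_ne hmm.2 e4⟩⟩, hG⟩

/-- The zeros of `lam ↦ G(lam, 0)` on the closed interval `closure E₀`. -/
lemma countable_zeros_lam {p u v slo shi : ℝ} {f : ℝ → ℝ} (hu : 0 < u) (hv : 0 < v)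
    (hslo : 0 < slo) (hss : slo < shi) (hshi : shi < 1)
    (hf : f ∈ Fclass slo shi) (hfa : AnalyticOnNhd ℝ f (Ioo slo shi))
    (h : ¬ ∀ lam ∈ Econf u v slo shi 0, Gfun p u v slo shi f lam 0 = 0) :
    {lam ∈ Icc (E0lo u v slo) (E0hi u v shi) | Gfun p u v slo shi f lam 0 = 0}.Countable := by
  have hE := Econf_zero_eq hu hv hslo hss hshi
  have hJ : {lam ∈ Econf u v slo shi 0 | Gfun p u v slo shi f lam 0 = 0}.Countable := by
    refine countable_zeros_integral (a := fun lam => mcut u lam 0) (b := fun lam => mmcut v lam 0)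
      hslo hss hshi hf hfa ?_ ?_ ?_ (fun c hc => hc.2.1) (fun c hc => hc.2.2) ?_
    · rw [hE]
      exact ordConnected_Ioo
    · intro lam hlam
      have := (mcut_den_pos (c := 0) hlam.1 (u := u) ⟨by norm_num, hu⟩).ne'
      unfold mcut
      fun_prop (disch := assumption)
    · intro lam hlam
      have := (mmcut_den_pos (c := 0) hlam.1 (v := v) ⟨by linarith, by norm_num⟩).ne'
      unfold mmcut
      fun_prop (disch := assumption)
    · push Not at h
      exact h
  refine (hJ.union (countable_singleton (E0lo u v slo) |>.union
    (countable_singleton (E0hi u v shi)))).mono ?_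
  rintro lam ⟨hlam, hG⟩
  by_cases e1 : lam = E0lo u v slo
  · exact Or.inr (Or.inl e1)
  by_cases e2 : lam = E0hi u v shi
  · exact Or.inr (Or.inr e2)
  refine Or.inl ⟨?_, hG⟩
  rw [hE]
  exact ⟨lt_of_le_of_ne hlam.1 (Ne.symm e1), lt_of_le_of_ne hlam.2 e2⟩

/-! ### Compact sets of approximate zeros -/

/-- Pairs `(lam, c)` with `lam` in the closed interval `closure E₀`, `c` in the closed range of
admissible shocks, and both cutoffs in the closed signal range. -/
def Kset (u v slo shi e0 : ℝ) : Set (ℝ × ℝ) :=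
  {q | q ∈ Icc (E0lo u v slo) (E0hi u v shi) ×ˢ
      (Icc (-1 + e0) (u - e0) ∩ Icc (-v + e0) (1 - e0)) ∧
    (mcut u q.1 q.2, mmcut v q.1 q.2) ∈ Icc slo shi ×ˢ Icc slo shi}

/-- Pairs of `Kset` at which `Gfun` is at most `δ` in absolute value, both without and with the
shock. -/
def Kapprox (p u v slo shi e0 : ℝ) (f : ℝ → ℝ) (δ : ℝ) : Set (ℝ × ℝ) :=
  {q | q ∈ Kset u v slo shi e0 ∧
    (Gfun p u v slo shi f q.1 0, Gfun p u v slo shi f q.1 q.2) ∈ Icc (-δ) δ ×ˢ Icc (-δ) δ}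

lemma continuousOn_cut_box {u v slo shi e0 : ℝ} (hu : 0 < u) (hslo : 0 < slo)
    (hss : slo < shi) (hshi : shi < 1) (he0 : 0 < e0) :
    ContinuousOn (fun q : ℝ × ℝ => (mcut u q.1 q.2, mmcut v q.1 q.2))
      (Icc (E0lo u v slo) (E0hi u v shi) ×ˢ
      (Icc (-1 + e0) (u - e0) ∩ Icc (-v + e0) (1 - e0))) := by
  have hpos : ∀ {l}, l ∈ Icc (E0lo u v slo) (E0hi u v shi) → 0 < l := fun h =>
    (E0lo_pos hu hslo (hss.trans hshi)).trans_le h.1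
  refine ContinuousOn.prodMk ?_ ?_
  · unfold mcut
    refine ContinuousOn.div (by fun_prop) (by fun_prop) fun q hq => ?_
    exact (mcut_den_pos (hpos hq.1) (Ioo_shrink he0 hq.2.1)).ne'
  · unfold mmcut
    refine ContinuousOn.div (by fun_prop) (by fun_prop) fun q hq => ?_
    exact (mmcut_den_pos (hpos hq.1) (Ioo_shrink he0 hq.2.2)).ne'

lemma isCompact_Kset {u v slo shi e0 : ℝ} (hu : 0 < u) (hslo : 0 < slo)
    (hss : slo < shi) (hshi : shi < 1) (he0 : 0 < e0) : IsCompact (Kset u v slo shi e0) := by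
  have hbox : IsCompact (Icc (E0lo u v slo) (E0hi u v shi) ×ˢ
      (Icc (-1 + e0) (u - e0) ∩ Icc (-v + e0) (1 - e0))) :=
    isCompact_Icc.prod (isCompact_Icc.inter isCompact_Icc)
  exact hbox.of_isClosed_subset
    ((continuousOn_cut_box hu hslo hss hshi he0).preimage_isClosed_of_isClosed hbox.isClosed
      (isClosed_Icc.prod isClosed_Icc)) fun q hq => hq.1

lemma isCompact_Kapprox {p u v slo shi e0 : ℝ} {f : ℝ → ℝ} (hu : 0 < u) (hv : 0 < v)
    (hslo : 0 < slo) (hss : slo < shi) (hshi : shi < 1) (he0 : 0 < e0)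
    (hf : f ∈ Fclass slo shi) (δ : ℝ) : IsCompact (Kapprox p u v slo shi e0 f δ) := by
  have hK : IsCompact (Kset u v slo shi e0) := isCompact_Kset hu hslo hss hshi he0
  have hcut := (continuousOn_cut_box (v := v) hu hslo hss hshi he0).mono
    (show Kset u v slo shi e0 ⊆ _ from fun q hq => hq.1)
  have hpos : ∀ q ∈ Kset u v slo shi e0, 0 < q.1 := fun q hq =>
    (E0lo_pos hu hslo (hss.trans hshi)).trans_le hq.1.1.1
  have hcont : ContinuousOn
      (fun q : ℝ × ℝ => (Gfun p u v slo shi f q.1 0, Gfun p u v slo shi f q.1 q.2))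
      (Kset u v slo shi e0) := by
    refine ContinuousOn.prodMk ?_ ?_
    · refine continuousOn_Gfun hslo hss hshi hf ?_ ?_
        (fun q hq => (cut_zero_mem_Icc hu hv hslo hss hshi hq.1.1).1)
        (fun q hq => (cut_zero_mem_Icc hu hv hslo hss hshi hq.1.1).2)
      · simp only [mcut_zero]
        exact ContinuousOn.div (by fun_prop) (by fun_prop)
          fun q hq => (add_pos (hpos q hq) hu).ne'
      · simp only [mmcut_zero]
        exact ContinuousOn.div (by fun_prop) (by fun_prop)
          fun q hq => (add_pos (hpos q hq) hv).ne'
    · exact continuousOn_Gfun hslo hss hshi hf hcut.fst hcut.snd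
        (fun q hq => hq.2.1) (fun q hq => hq.2.2)
  exact hK.of_isClosed_subset (hcont.preimage_isClosed_of_isClosed hK.isClosed
    (isClosed_Icc.prod isClosed_Icc)) fun q hq => hq.1

/-- The stationary shocks of a signal close to `f` are approximately stationary for `f`. -/
lemma statSet_subset_of_close {p u v slo shi e0 δ : ℝ} {f g : ℝ → ℝ} (hp : p ∈ Ioo (0:ℝ) 1)
    (hu : 0 < u) (hv : 0 < v) (hslo : 0 < slo) (hss : slo < shi) (hshi : shi < 1)
    (hf : f ∈ Fclass slo shi) (hg : g ∈ Fclass slo shi)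
    (hfg : ∀ s ∈ Ioo slo shi, |f s - g s| ≤ δ * slo) :
    statSet p u v slo shi e0 g ⊆
      Prod.snd '' Kapprox p u v slo shi e0 f δ ∩ Ceps u v slo shi e0 := by
  rintro c ⟨hcC, lam, ⟨hl0, hlc⟩, hG0, hGc⟩
  have hI : lam ∈ Icc (E0lo u v slo) (E0hi u v shi) := by
    rw [Econf_zero_eq hu hv hslo hss hshi] at hl0
    exact Ioo_subset_Icc_self hl0
  have key : ∀ d, lam ∈ Econf u v slo shi d → Gfun p u v slo shi g lam d = 0 →
      Gfun p u v slo shi f lam d ∈ Icc (-δ) δ := by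
    intro d hd hGd
    have := abs_Gfun_sub_le hp hslo hss hshi hf hg hfg
      (Ioo_subset_Icc_self hd.2.1) (Ioo_subset_Icc_self hd.2.2)
    rw [hGd, sub_zero, mul_div_cancel_right₀ _ hslo.ne', abs_le] at this
    exact this
  refine ⟨⟨(lam, c), ⟨⟨⟨hI, Ioo_subset_Icc_self hcC.1.2, Ioo_subset_Icc_self hcC.2⟩,
    Ioo_subset_Icc_self hlc.2.1, Ioo_subset_Icc_self hlc.2.2⟩, ?_, ?_⟩, rfl⟩, hcC⟩
  · exact key 0 hl0 hG0
  · exact key c hlc hGc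

/-- a real-analytic signal (with the stated non-degeneracy conditions)
is not in the closure of F_n. -/
theorem analytic_signal_not_in_closure_Fn
    (p u v slo shi e0 : ℝ) (n : ℕ)
    (hp : p ∈ Ioo (0:ℝ) 1) (hu : 0 < u) (hv : 0 < v) (huv : u ≠ v)
    (hslo : 0 < slo) (hss : slo < shi) (hshi : shi < 1)
    (hE0 : (Econf u v slo shi 0).Nonempty)
    (he0 : 0 < e0) (hC : (Ceps u v slo shi e0).Nonempty)
    (hn : 1 ≤ n)
    (f : ℝ → ℝ) (hf : f ∈ Fclass slo shi)
    (hfa : AnalyticOnNhd ℝ f (Ioo slo shi))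
    (hG0 : ¬ ∀ lam ∈ Econf u v slo shi 0, Gfun p u v slo shi f lam 0 = 0)
    (hGc : ∀ lam ∈ closure (Econf u v slo shi 0), Gfun p u v slo shi f lam 0 = 0 →
      ¬ ∀ c ∈ interior (Mset u v slo shi e0 lam), Gfun p u v slo shi f lam c = 0) :
    ¬ InClosureIn slo shi (Fn p u v slo shi e0 n) f := by
  intro hcl
  have hclos : closure (Econf u v slo shi 0) = Icc (E0lo u v slo) (E0hi u v shi) := by
    rw [Econf_zero_eq hu hv hslo hss hshi] at hE0 ⊢
    exact closure_Ioo (nonempty_Ioo.1 hE0).ne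
  set δ : ℕ → ℝ := fun k => 1 / ((k : ℝ) + 1) with hδ
  have hδpos : ∀ k, 0 < δ k := fun k => Nat.one_div_pos_of_nat
  have hδanti : Antitone δ := fun i j hij => Nat.one_div_le_one_div hij
  have hδlim : Filter.Tendsto δ Filter.atTop (nhds 0) := tendsto_one_div_add_atTop_nhds_zero_nat
  set A : ℕ → Set (ℝ × ℝ) := fun k => Kapprox p u v slo shi e0 f (δ k) with hA
  have hAcomp : ∀ k, IsCompact (A k) := fun k =>
    isCompact_Kapprox hu hv hslo hss hshi he0 hf (δ k)
  have hAanti : Antitone A := fun i j hij q hq =>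
    have hle := hδanti hij
    have hsub : Icc (-δ j) (δ j) ⊆ Icc (-δ i) (δ i) := Icc_subset_Icc (neg_le_neg hle) hle
    ⟨hq.1, hsub hq.2.1, hsub hq.2.2⟩
  set B : ℕ → Set ℝ := fun k => Prod.snd '' A k with hB
  have hBcomp : ∀ k, IsCompact (B k) := fun k => (hAcomp k).image continuous_snd
  have hBanti : Antitone B := fun i j hij => image_mono (hAanti hij)
  set μ : Measure ℝ := volume.restrict (Ceps u v slo shi e0) with hμ
  have hμB : ∀ k, μ (B k) = volume (B k ∩ Ceps u v slo shi e0) := fun k =>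
    Measure.restrict_apply (hBcomp k).isClosed.measurableSet
  have hlower : ∀ k, (1 : ℝ≥0∞) / n ≤ μ (B k) := by
    intro k
    obtain ⟨g, ⟨hgF, hgn⟩, hfg⟩ := hcl (δ k * slo) (mul_pos (hδpos k) hslo)
    rw [hμB]
    exact hgn.trans (measure_mono (statSet_subset_of_close hp hu hv hslo hss hshi hf hgF
      (abs_sub_le_of_supDist_lt hf hgF hfg)))
  have hlim := tendsto_measure_iInter_atTop (μ := μ) (s := B)
    (fun k => (hBcomp k).isClosed.measurableSet.nullMeasurableSet) hBanti
    ⟨0, ((Measure.restrict_apply_le _ _).trans_lt (hBcomp 0).measure_lt_top).ne⟩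
  have hge : (1 : ℝ≥0∞) / n ≤ μ (⋂ k, B k) := ge_of_tendsto' hlim hlower
  -- Each limit shock is a zero of `c ↦ G_f(λ, c)` for one of countably many `λ`.
  have hsub : (⋂ k, B k) ∩ Ceps u v slo shi e0 ⊆
      ⋃ lam ∈ {lam ∈ Icc (E0lo u v slo) (E0hi u v shi) | Gfun p u v slo shi f lam 0 = 0},
        {c ∈ Mset u v slo shi e0 lam | Gfun p u v slo shi f lam c = 0} := by
    rintro c ⟨hcB, hcC⟩
    -- Cantor's intersection theorem on the compact slices `A k ∩ {q | q.2 = c}`.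
    obtain ⟨q, hq⟩ := IsCompact.nonempty_iInter_of_sequence_nonempty_isCompact_isClosed
      (fun k => A k ∩ Prod.snd ⁻¹' {c})
      (fun k => inter_subset_inter_left _ (hAanti k.le_succ))
      (fun k => by
        obtain ⟨q, hq, hqc⟩ := mem_iInter.1 hcB k
        exact ⟨q, hq, hqc⟩)
      ((hAcomp 0).inter_right (isClosed_singleton.preimage continuous_snd))
      (fun k => (hAcomp k).isClosed.inter (isClosed_singleton.preimage continuous_snd))
    rw [mem_iInter] at hq
    have hqc : q.2 = c := (hq 0).2
    have hzero : ∀ y, (∀ k, y ∈ Icc (-δ k) (δ k)) → y = 0 := fun y hy =>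
      le_antisymm (ge_of_tendsto' hδlim fun k => (hy k).2)
        (le_of_tendsto' (by simpa using hδlim.neg) fun k => (hy k).1)
    have h1 := hzero _ fun k => (hq k).1.2.1
    have h2 := hzero _ fun k => (hq k).1.2.2
    have hK := (hq 0).1.1
    simp only [mem_iUnion]
    subst hqc
    exact ⟨q.1, ⟨hK.1.1, h1⟩, ⟨hcC, hK.2.1, hK.2.2⟩, h2⟩
  have hcount : ((⋂ k, B k) ∩ Ceps u v slo shi e0).Countable := by
    refine ((countable_zeros_lam hu hv hslo hss hshi hf hfa hG0).biUnion
      fun lam hlam => ?_).mono hsub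
    exact countable_zeros_shock hslo hss hshi he0
      ((E0lo_pos hu hslo (hss.trans hshi)).trans_le hlam.1.1) hf hfa
      (hGc lam (hclos ▸ hlam.1) hlam.2)
  have hzero : μ (⋂ k, B k) = 0 := by
    rw [Measure.restrict_apply
      (MeasurableSet.iInter fun k => (hBcomp k).isClosed.measurableSet)]
    exact hcount.measure_zero _
  rw [hzero] at hge
  simp at hge
end
end

section
/- The set F_zero = {f ∈ F^∞ : there exist s̲ < z₁ < z₂ < s̄ such that f = 0 almost everywhere on [z₁,z₂]} is of first category (meagre) in F^∞ with the sup-norm metric. -/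
/-!
The locally-zero signals are covered by the countably many sets `{f ∈ F^∞ : f q = 0}`, `q` a
rational point of `(slo, shi)`, because a continuous function vanishing a.e. on an interval vanishes
at the rational points inside it. Each of these sets is nowhere dense: evaluation at `q` is
`1`-Lipschitz for the sup distance, so it suffices to approximate any signal `f` by signals `g`
with `g q > 0`.

Such a `g` is found in the form `g s = f s * (a + b * s) + t * s` with `t > 0` small
(`exists_perturbation`). With `E = ∫ f (1 - 2 s)`, the constraint `∫ g (1 - 2 s) / s = 0` reads
`b * E + t * ∫ (1 - 2 s) = 0`, and `∫ g = 1` then determines `a`; both `a - 1` and `b` are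
proportional to `t`. The equation for `b` is solvable because
`-2 E = ∫ f (1 - 2 s) ^ 2 / s > 0` (`integral_one_sub_two_mul_ne_zero`).
-/

open Set MeasureTheory
open scoped ENNReal

noncomputable section

lemma integrableOn_of_bdd {slo shi M : ℝ} {f : ℝ → ℝ} (hc : ContinuousOn f (Ioo slo shi))
    (hM : ∀ s ∈ Ioo slo shi, |f s| ≤ M) : IntegrableOn f (Ioo slo shi) := by
  refine Integrable.of_bound (hc.aestronglyMeasurable measurableSet_Ioo) M ?_
  filter_upwards [ae_restrict_mem measurableSet_Ioo] with s hs
  simpa using hM s hs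

lemma interval_eq_Ioo {slo shi : ℝ} (h : slo ≤ shi) (f : ℝ → ℝ) :
    ∫ s in slo..shi, f s = ∫ s in Ioo slo shi, f s := by
  rw [intervalIntegral.integral_of_le h, integral_Ioc_eq_integral_Ioo]

lemma integral_comb {A : Set ℝ} {u v w : ℝ → ℝ} (hu : IntegrableOn u A) (hv : IntegrableOn v A)
    (hw : IntegrableOn w A) (a b c : ℝ) :
    ∫ s in A, (a * u s + b * v s + c * w s)
      = a * (∫ s in A, u s) + b * (∫ s in A, v s) + c * ∫ s in A, w s := by
  have huv : Integrable (fun s => a * u s + b * v s) (volume.restrict A) :=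
    (hu.const_mul a).add (hv.const_mul b)
  rw [integral_add huv (hw.const_mul c), integral_add (hu.const_mul a) (hv.const_mul b),
    integral_const_mul, integral_const_mul, integral_const_mul]

lemma Fclass_integrable {slo shi : ℝ} (hslo : 0 ≤ slo) (hshi : shi ≤ 1) {f : ℝ → ℝ}
    (hf : f ∈ Fclass slo shi) :
    IntegrableOn f (Ioo slo shi) ∧ IntegrableOn (fun s => f s * s) (Ioo slo shi) ∧
      IntegrableOn (fun s => f s * (1 - 2 * s) / s) (Ioo slo shi) := by
  obtain ⟨hc, h0, -, -, ⟨M, hM⟩, ⟨M', hM'⟩⟩ := hf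
  have hne : ∀ s ∈ Ioo slo shi, s ≠ 0 := fun s hs => (hslo.trans_lt hs.1).ne'
  refine ⟨integrableOn_of_bdd hc hM, integrableOn_of_bdd (M := M) (by fun_prop) ?_,
    integrableOn_of_bdd (M := M' + M) ?_ ?_⟩
  · intro s hs
    have h1 : |s| ≤ 1 := by
      rw [abs_of_nonneg (hslo.trans hs.1.le)]; exact hs.2.le.trans hshi
    rw [abs_mul]
    nlinarith [hM s hs, abs_nonneg (f s), abs_nonneg s]
  · exact (hc.mul (by fun_prop)).div continuousOn_id hne
  · intro s hs
    have : f s * (1 - 2 * s) / s = f s * (1 - s) / s - f s := by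
      have := hne s hs
      field_simp
      ring
    rw [this]
    exact (abs_sub _ _).trans (add_le_add (hM' s hs) (hM s hs))

/-- The left side is `∫ f (1 - 2 s)`, because `∫ f = 1`. If it vanished, then, since
`∫ f (1 - 2 s) / s = 0`, so would `∫ f (1 - 2 s) ^ 2 / s`, whose integrand is
nonnegative; hence `f = 0` a.e., contradicting `∫ f = 1`. -/
lemma integral_one_sub_two_mul_ne_zero {slo shi : ℝ} (hslo : 0 ≤ slo) (hss : slo < shi)
    (hshi : shi ≤ 1) {f : ℝ → ℝ} (hf : f ∈ Fclass slo shi) :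
    1 - 2 * ∫ s in Ioo slo shi, f s * s ≠ 0 := by
  intro hE
  obtain ⟨hi, his, hip⟩ := Fclass_integrable hslo hshi hf
  obtain ⟨hc, h0, h1, hz, -, -⟩ := hf
  rw [interval_eq_Ioo hss.le] at h1 hz
  have hint : IntegrableOn (fun s => 1 * (f s * (1 - 2 * s) / s) + -2 * f s + 4 * (f s * s))
      (Ioo slo shi) := ((hip.const_mul 1).add (hi.const_mul (-2))).add (his.const_mul 4)
  have hval : ∫ s in Ioo slo shi, (1 * (f s * (1 - 2 * s) / s) + -2 * f s + 4 * (f s * s)) = 0 := by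
    rw [integral_comb hip hi his, h1, hz]
    linarith
  have hform : ∀ s ∈ Ioo slo shi, 1 * (f s * (1 - 2 * s) / s) + -2 * f s + 4 * (f s * s)
      = f s * (1 - 2 * s) ^ 2 / s := by
    intro s hs
    have : s ≠ 0 := (hslo.trans_lt hs.1).ne'
    field_simp
    ring
  have hnn : 0 ≤ᵐ[volume.restrict (Ioo slo shi)]
      fun s => 1 * (f s * (1 - 2 * s) / s) + -2 * f s + 4 * (f s * s) := by
    filter_upwards [ae_restrict_mem measurableSet_Ioo] with s hs
    have hs0 : 0 < s := hslo.trans_lt hs.1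
    have := h0 s hs
    rw [hform s hs]
    simp only [Pi.zero_apply]
    positivity
  have hae := (integral_eq_zero_iff_of_nonneg_ae hnn hint).1 hval
  have hhalf : ∀ᵐ s ∂(volume.restrict (Ioo slo shi)), s ≠ (1 / 2 : ℝ) :=
    ae_restrict_of_ae (Measure.ae_ne volume _)
  have hf0 : f =ᵐ[volume.restrict (Ioo slo shi)] 0 := by
    filter_upwards [hae, hhalf, ae_restrict_mem measurableSet_Ioo] with s hs hne hm
    have hs0 : s ≠ 0 := (hslo.trans_lt hm.1).ne'
    rw [hform s hm] at hs
    simp only [Pi.zero_apply, div_eq_zero_iff, mul_eq_zero, hs0, or_false] at hs ⊢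
    rcases hs with hs | hs
    · exact hs
    · exact absurd (by linarith [pow_eq_zero_iff (two_ne_zero) |>.1 hs]) hne
  rw [integral_congr_ae hf0] at h1
  simp at h1

/-- Every signal is a uniform limit of signals that are positive on all of `(slo, shi)`. -/
lemma exists_perturbation {slo shi : ℝ} (hslo : 0 ≤ slo) (hss : slo < shi)
    (hshi : shi ≤ 1) {f : ℝ → ℝ} (hf : f ∈ Fclass slo shi) {ε : ℝ} (hε : 0 < ε) :
    ∃ g ∈ Fclass slo shi, supDist slo shi f g < ε ∧ ∀ s ∈ Ioo slo shi, 0 < g s := by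
  have hE := integral_one_sub_two_mul_ne_zero hslo hss hshi hf
  obtain ⟨hi, his, hip⟩ := Fclass_integrable hslo hshi hf
  obtain ⟨hc, h0, h1, hz, ⟨M, hM⟩, ⟨M', hM'⟩⟩ := hf
  rw [interval_eq_Ioo hss.le] at h1 hz
  set F := ∫ s in Ioo slo shi, f s * s with hF
  set S := ∫ s in Ioo slo shi, s with hS
  set J := ∫ s in Ioo slo shi, (1 - 2 * s) with hJ
  have hIs : IntegrableOn (fun s : ℝ => s) (Ioo slo shi) :=
    (continuous_id.integrableOn_Icc).mono_set Ioo_subset_Icc_self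
  have hIJ : IntegrableOn (fun s : ℝ => 1 - 2 * s) (Ioo slo shi) :=
    (Continuous.integrableOn_Icc (by fun_prop)).mono_set Ioo_subset_Icc_self
  -- The coefficients of `g` are `b = t * Y` and `a = 1 - t * X`.
  obtain ⟨Y, hY⟩ : ∃ Y, Y * (1 - 2 * F) + J = 0 := ⟨-J / (1 - 2 * F), by
    rw [div_mul_cancel₀ _ hE, neg_add_cancel]⟩
  obtain ⟨X, hX⟩ : ∃ X, X = Y * F + S := ⟨_, rfl⟩
  obtain ⟨L, hL⟩ : ∃ L, L = |X| + |Y| + 1 := ⟨_, rfl⟩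
  have hL0 : 0 < L := by rw [hL]; positivity
  have hM0 : 0 ≤ M := by
    obtain ⟨s, hs⟩ := nonempty_Ioo.2 hss
    exact (abs_nonneg _).trans (hM s hs)
  have hD : 0 < 2 * (M * L + 1) := by positivity
  obtain ⟨t, ht0, htL, htε⟩ : ∃ t : ℝ, 0 < t ∧ t * L ≤ 1 ∧ t * (M * L + 1) < ε := by
    refine ⟨min (1 / L) (ε / (2 * (M * L + 1))), by positivity, ?_, ?_⟩
    · exact (le_div_iff₀ hL0).1 (min_le_left _ _)
    · have := (le_div_iff₀ hD).1 (min_le_right (1 / L) (ε / (2 * (M * L + 1))))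
      linarith
  have hs01 : ∀ s ∈ Ioo slo shi, 0 < s ∧ s ≤ 1 := fun s hs =>
    ⟨hslo.trans_lt hs.1, hs.2.le.trans hshi⟩
  have hXY : ∀ s ∈ Ioo slo shi, |X - Y * s| ≤ L := by
    intro s hs
    obtain ⟨hs0, hs1⟩ := hs01 s hs
    have h2 : |Y * s| ≤ |Y| := by
      rw [abs_mul, abs_of_pos hs0]
      exact mul_le_of_le_one_right (abs_nonneg _) hs1
    have := abs_sub X (Y * s)
    linarith
  set g : ℝ → ℝ := fun s => f s * (1 - t * X + t * Y * s) + t * s with hg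
  have hw : ∀ s ∈ Ioo slo shi, 0 ≤ 1 - t * X + t * Y * s := by
    intro s hs
    have := (abs_le.1 (hXY s hs)).2
    nlinarith
  have hpos : ∀ s ∈ Ioo slo shi, 0 < g s := fun s hs =>
    add_pos_of_nonneg_of_pos (mul_nonneg (h0 s hs) (hw s hs)) (mul_pos ht0 (hs01 s hs).1)
  have hw2 : ∀ s ∈ Ioo slo shi, |1 - t * X + t * Y * s| ≤ 2 := by
    intro s hs
    rw [abs_of_nonneg (hw s hs)]
    have := (abs_le.1 (hXY s hs)).1
    nlinarith
  have ht1 : t ≤ 1 := by nlinarith [abs_nonneg X, abs_nonneg Y]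
  have hdist : ∀ s ∈ Ioo slo shi, |f s - g s| ≤ t * (M * L + 1) := by
    intro s hs
    obtain ⟨hs0, hs1⟩ := hs01 s hs
    have e : f s - g s = t * (f s * (X - Y * s) - s) := by simp only [hg]; ring
    rw [e, abs_mul, abs_of_pos ht0]
    refine mul_le_mul_of_nonneg_left ((abs_sub _ _).trans (add_le_add ?_ ?_)) ht0.le
    · rw [abs_mul]
      exact mul_le_mul (hM s hs) (hXY s hs) (abs_nonneg _) hM0
    · rwa [abs_of_pos hs0]
  refine ⟨g, ⟨by fun_prop, fun s hs => (hpos s hs).le, ?_, ?_, ⟨M * 2 + 1, ?_⟩,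
    ⟨M' * 2 + 1, ?_⟩⟩, ?_, hpos⟩
  · rw [interval_eq_Ioo hss.le]
    have e : ∀ s, g s = (1 - t * X) * f s + t * Y * (f s * s) + t * s := by
      intro s; simp only [hg]; ring
    simp only [e]
    rw [integral_comb hi his hIs, h1, ← hF, ← hS, hX]
    ring
  · rw [interval_eq_Ioo hss.le]
    have e : ∀ s ∈ Ioo slo shi, g s * (1 - 2 * s) / s = (1 - t * X) * (f s * (1 - 2 * s) / s)
        + t * Y * (f s - 2 * (f s * s)) + t * (1 - 2 * s) := by
      intro s hs
      have := (hs01 s hs).1.ne'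
      simp only [hg]
      field_simp
    have hi2 : IntegrableOn (fun s => f s - 2 * (f s * s)) (Ioo slo shi) :=
      hi.sub (his.const_mul 2)
    rw [setIntegral_congr_fun measurableSet_Ioo e,
      integral_comb hip hi2 hIJ, integral_sub hi (his.const_mul 2), integral_const_mul, h1, hz,
      ← hF, ← hJ]
    linear_combination t * hY
  · intro s hs
    obtain ⟨hs0, hs1⟩ := hs01 s hs
    refine (abs_add_le _ _).trans (add_le_add ?_ ?_)
    · rw [abs_mul]
      exact mul_le_mul (hM s hs) (hw2 s hs) (abs_nonneg _) hM0
    · rw [abs_of_pos (mul_pos ht0 hs0)]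
      nlinarith
  · intro s hs
    obtain ⟨hs0, hs1⟩ := hs01 s hs
    have e : g s * (1 - s) / s
        = f s * (1 - s) / s * (1 - t * X + t * Y * s) + t * (1 - s) := by
      simp only [hg]
      field_simp
    rw [e]
    refine (abs_add_le _ _).trans (add_le_add ?_ ?_)
    · rw [abs_mul]
      exact mul_le_mul (hM' s hs) (hw2 s hs) (abs_nonneg _) ((abs_nonneg _).trans (hM' s hs))
    · rw [abs_of_nonneg (mul_nonneg ht0.le (by linarith))]
      nlinarith
  · have : Nonempty (Ioo slo shi) := (nonempty_Ioo.2 hss).to_subtype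
    exact (ciSup_le fun s : Ioo slo shi => hdist s.1 s.2).trans_lt htε

/-- Boundedness of signals makes the supremum in `supDist` a genuine one. -/
lemma le_supDist {slo shi : ℝ} {f g : ℝ → ℝ} (hf : f ∈ Fclass slo shi) (hg : g ∈ Fclass slo shi)
    {q : ℝ} (hq : q ∈ Ioo slo shi) : |f q - g q| ≤ supDist slo shi f g := by
  obtain ⟨-, -, -, -, ⟨M, hM⟩, -⟩ := hf
  obtain ⟨-, -, -, -, ⟨M', hM'⟩, -⟩ := hg
  refine le_ciSup (f := fun s : Ioo slo shi => |f s.1 - g s.1|) ⟨M + M', ?_⟩ ⟨q, hq⟩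
  rintro _ ⟨s, rfl⟩
  exact (abs_sub _ _).trans (add_le_add (hM s s.2) (hM' s s.2))

lemma nowhereDense_zero_at {slo shi : ℝ} (hslo : 0 ≤ slo) (hss : slo < shi)
    (hshi : shi ≤ 1) (q : ℝ) :
    NowhereDenseIn slo shi {f ∈ Fclass slo shi | q ∈ Ioo slo shi ∧ f q = 0} := by
  intro f hf ε hε
  obtain ⟨g, hg, hfg, hpos⟩ := exists_perturbation hslo hss hshi hf hε
  refine ⟨g, hg, hfg, ?_⟩
  by_cases hq : q ∈ Ioo slo shi
  · refine ⟨g q, hpos q hq, ?_⟩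
    rintro h ⟨hh, -, hz⟩ hlt
    have := le_supDist hg hh hq
    rw [hz, sub_zero] at this
    exact absurd ((le_abs_self _).trans this) (not_le.2 hlt)
  · exact ⟨1, one_pos, fun h hh => absurd hh.2.1 hq⟩

/-- the set of locally-zero signals is of first category (meagre) in F^∞. -/
theorem Fzero_meagre
    (slo shi : ℝ) (hslo : 0 ≤ slo) (hss : slo < shi) (hshi : shi ≤ 1) :
    MeagreIn slo shi
      {f ∈ Fclass slo shi | ∃ z1 z2 : ℝ, slo < z1 ∧ z1 < z2 ∧ z2 < shi ∧
        (∀ᵐ s ∂(volume.restrict (Icc z1 z2)), f s = 0)} := by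
  obtain ⟨r, hr⟩ := exists_surjective_nat ℚ
  refine ⟨fun n => {f ∈ Fclass slo shi | (r n : ℝ) ∈ Ioo slo shi ∧ f (r n) = 0},
    fun n => nowhereDense_zero_at hslo hss hshi _, ?_⟩
  rintro f ⟨hf, z1, z2, h1, h12, h2, hae⟩
  obtain ⟨q, hq1, hq2⟩ := exists_rat_btwn h12
  obtain ⟨n, rfl⟩ := hr q
  refine mem_iUnion.2 ⟨n, hf, ?_⟩
  refine ⟨⟨h1.trans hq1, hq2.trans h2⟩, ?_⟩
  have hcont : ContinuousOn f (Icc z1 z2) :=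
    hf.1.mono fun s hs => ⟨h1.trans_le hs.1, hs.2.trans_lt h2⟩
  exact Measure.eqOn_Icc_of_ae_eq volume h12.ne hae hcont continuousOn_const
    ⟨hq1.le, hq2.le⟩
end
end

section
/- For any fixed z₁, z₂ with s̲ < z₁ < z₂ < s̄, the set F_{[z₁,z₂]} = {f ∈ F^∞ : f = 0 almost everywhere on [z₁,z₂]} is nowhere dense in F^∞ with the sup-norm metric. -/
/-!
If `F^∞` has an element, then `slo < 1/2 < shi`, because `(1 - 2s)/s` changes sign only at `1/2`
(`half_mem_of_mem_Fclass`). In that case there is a signal `k ∈ F^∞` which is positive at every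
point of `(slo, shi)` except `1/2` (`exists_pos_signal`): take
`k(s) = C s (B (1/2 - s)⁺ + A (s - 1/2)⁺)` with `A`, `B`, `C > 0` chosen to meet the two integral
constraints. As `F^∞` is convex, `g = (1 - t) f + t k` lies in `F^∞`; it is close to `f` for small
`t > 0`, and `g x₀ > 0` at any fixed `x₀ ∈ (z1, z2)` with `x₀ ≠ 1/2`. A continuous signal vanishing
a.e. on `[z1, z2]` vanishes at `x₀`, hence is at sup-distance at least `g x₀` from `g`.
-/

open Set MeasureTheory
open scoped ENNReal

noncomputable section

lemma intervalIntegrable_of_bdd {a b : ℝ} (hab : a ≤ b) {f : ℝ → ℝ}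
    (hc : ContinuousOn f (Ioo a b)) {M : ℝ} (hM : ∀ s ∈ Ioo a b, |f s| ≤ M) :
    IntervalIntegrable f volume a b := by
  rw [intervalIntegrable_iff_integrableOn_Ioo_of_le hab]
  refine IntegrableOn.of_bound (by simp) (hc.aestronglyMeasurable measurableSet_Ioo) M ?_
  filter_upwards [ae_restrict_mem measurableSet_Ioo] with s hs using hM s hs

lemma Fclass_intervalIntegrable {slo shi : ℝ} (h : slo < shi) {f : ℝ → ℝ}
    (hf : f ∈ Fclass slo shi) : IntervalIntegrable f volume slo shi := by
  obtain ⟨hc, -, -, -, ⟨M, hM⟩, -⟩ := hf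
  exact intervalIntegrable_of_bdd h.le hc hM

/-- The integrand of the second constraint is bounded since `f (1-2s)/s = f (1-s)/s - f`. -/
lemma Fclass_intervalIntegrable_weight {slo shi : ℝ} (hslo : 0 ≤ slo) (h : slo < shi)
    {f : ℝ → ℝ} (hf : f ∈ Fclass slo shi) :
    IntervalIntegrable (fun s => f s * (1 - 2 * s) / s) volume slo shi := by
  obtain ⟨hc, -, -, -, ⟨M, hM⟩, ⟨N, hN⟩⟩ := hf
  refine intervalIntegrable_of_bdd (M := N + M) h.le ?_ ?_
  · refine (hc.mul (by fun_prop)).div continuousOn_id ?_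
    intro s hs
    exact (hslo.trans_lt hs.1).ne'
  · intro s hs
    have hs0 : s ≠ 0 := (hslo.trans_lt hs.1).ne'
    have e : f s * (1 - 2 * s) / s = f s * (1 - s) / s - f s := by field_simp; ring
    rw [e]
    exact (abs_sub _ _).trans (add_le_add (hN s hs) (hM s hs))

/-- The factor `1 - 2s` has no constant strict sign (that of `c`) on `(slo, shi)`: otherwise
`∫ f (1-2s)/s = 0` and `f ≥ 0` force `f = 0` a.e., against `∫ f = 1`. -/
lemma not_signed_of_mem_Fclass {slo shi : ℝ} (hslo : 0 ≤ slo) (h : slo < shi)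
    {f : ℝ → ℝ} (hf : f ∈ Fclass slo shi) (c : ℝ)
    (hpos : ∀ s ∈ Ioo slo shi, 0 < c * (1 - 2 * s)) : False := by
  have hi := (Fclass_intervalIntegrable_weight hslo h hf).const_mul c
  rw [intervalIntegrable_iff_integrableOn_Ioo_of_le h.le] at hi
  obtain ⟨-, hnn, h1, h0, -, -⟩ := hf
  have hz : ∫ s in Ioo slo shi, c * (f s * (1 - 2 * s) / s) = 0 := by
    rw [integral_const_mul, ← integral_Ioc_eq_integral_Ioo,
      ← intervalIntegral.integral_of_le h.le, h0, mul_zero]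
  rw [integral_eq_zero_iff_of_nonneg_ae ?_ hi] at hz
  · have hf0 : f =ᵐ[volume.restrict (Ioo slo shi)] 0 := by
      filter_upwards [hz, ae_restrict_mem measurableSet_Ioo] with s hs hmem
      have hs0 : 0 < s := hslo.trans_lt hmem.1
      have hp := hpos s hmem
      have e : c * (f s * (1 - 2 * s) / s) = f s * (c * (1 - 2 * s) / s) := by ring
      simp only [Pi.zero_apply] at hs ⊢
      rw [e] at hs
      exact (mul_eq_zero.mp hs).resolve_right (div_pos hp hs0).ne'
    rw [intervalIntegral.integral_of_le h.le, integral_Ioc_eq_integral_Ioo,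
      integral_congr_ae hf0] at h1
    simp at h1
  · filter_upwards [ae_restrict_mem measurableSet_Ioo] with s hmem
    have hs0 : 0 < s := hslo.trans_lt hmem.1
    have e : c * (f s * (1 - 2 * s) / s) = f s * (c * (1 - 2 * s) / s) := by ring
    simp only [Pi.zero_apply]
    rw [e]
    exact mul_nonneg (hnn s hmem) (div_pos (hpos s hmem) hs0).le

lemma half_mem_of_mem_Fclass {slo shi : ℝ} (hslo : 0 ≤ slo) (h : slo < shi)
    {f : ℝ → ℝ} (hf : f ∈ Fclass slo shi) : slo < 1 / 2 ∧ 1 / 2 < shi := by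
  constructor
  · by_contra! hc
    exact not_signed_of_mem_Fclass hslo h hf (-1) fun s hs => by linarith [hs.1]
  · by_contra! hc
    exact not_signed_of_mem_Fclass hslo h hf 1 fun s hs => by linarith [hs.2]

lemma exists_pos_signal {slo shi : ℝ} (hslo : 0 ≤ slo) (hl : slo < 1 / 2) (hr : 1 / 2 < shi) :
    ∃ k ∈ Fclass slo shi, ∀ s ∈ Ioo slo shi, s ≠ 1 / 2 → 0 < k s := by
  have h : slo < shi := hl.trans hr
  set φ : ℝ → ℝ := fun s => max (1 / 2 - s) 0 with hφ
  set ψ : ℝ → ℝ := fun s => max (s - 1 / 2) 0 with hψ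
  have cφ : Continuous φ := by fun_prop
  have cψ : Continuous ψ := by fun_prop
  have nφ : ∀ s, 0 ≤ φ s := fun s => le_max_right _ _
  have nψ : ∀ s, 0 ≤ ψ s := fun s => le_max_right _ _
  set A := ∫ s in slo..shi, φ s ^ 2 with hA
  set B := ∫ s in slo..shi, ψ s ^ 2 with hB
  have pA : 0 < A := by
    refine intervalIntegral.integral_pos h (by fun_prop) (fun s _ => sq_nonneg _)
      ⟨slo, left_mem_Icc.2 h.le, ?_⟩
    have : 0 < φ slo := lt_max_of_lt_left (by linarith)
    positivity
  have pB : 0 < B := by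
    refine intervalIntegral.integral_pos h (by fun_prop) (fun s _ => sq_nonneg _)
      ⟨shi, right_mem_Icc.2 h.le, ?_⟩
    have : 0 < ψ shi := lt_max_of_lt_left (by linarith)
    positivity
  set q : ℝ → ℝ := fun s => B * φ s + A * ψ s with hq
  have cq : Continuous q := by fun_prop
  have nq : ∀ s, 0 ≤ q s := fun s =>
    add_nonneg (mul_nonneg pB.le (nφ s)) (mul_nonneg pA.le (nψ s))
  have pq : ∀ s, s ≠ 1 / 2 → 0 < q s := by
    intro s hs
    rcases lt_or_gt_of_ne hs with hs | hs
    · have : 0 < φ s := lt_max_of_lt_left (by linarith)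
      exact add_pos_of_pos_of_nonneg (mul_pos pB this) (mul_nonneg pA.le (nψ s))
    · have : 0 < ψ s := lt_max_of_lt_left (by linarith)
      exact add_pos_of_nonneg_of_pos (mul_nonneg pB.le (nφ s)) (mul_pos pA this)
  set I := ∫ s in slo..shi, s * q s with hI
  have pI : 0 < I := by
    refine intervalIntegral.integral_pos h (by fun_prop)
      (fun s hs => mul_nonneg (hslo.trans hs.1.le) (nq s)) ⟨shi, right_mem_Icc.2 h.le, ?_⟩
    exact mul_pos (by linarith) (pq shi hr.ne')
  have bdd : ∀ F : ℝ → ℝ, Continuous F → ∃ M : ℝ, ∀ s ∈ Ioo slo shi, |F s| ≤ M := by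
    intro F hF
    obtain ⟨M, hM⟩ := isCompact_Icc.exists_bound_of_continuousOn (s := Icc slo shi) hF.continuousOn
    exact ⟨M, fun s hs => hM s (Ioo_subset_Icc_self hs)⟩
  refine ⟨fun s => I⁻¹ * (s * q s), ⟨by fun_prop, ?_, ?_, ?_, bdd _ (by fun_prop), ?_⟩, ?_⟩
  · intro s hs
    have : 0 ≤ s := hslo.trans hs.1.le
    exact mul_nonneg (inv_nonneg.2 pI.le) (mul_nonneg this (nq s))
  · rw [intervalIntegral.integral_const_mul]
    exact inv_mul_cancel₀ pI.ne'
  · -- On `(slo, shi]` the integrand is `2 I⁻¹ (B φ² - A ψ²)`, because `1/2 - s = φ - ψ`, `φ ψ = 0`.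
    have e : ∀ s ∈ Ioc slo shi, I⁻¹ * (s * q s) * (1 - 2 * s) / s
        = 2 * I⁻¹ * (B * φ s ^ 2 - A * ψ s ^ 2) := by
      intro s hs
      have hs0 : s ≠ 0 := (hslo.trans_lt hs.1).ne'
      rcases le_total s (1 / 2) with hh | hh
      · have e1 : φ s = 1 / 2 - s := max_eq_left (by linarith)
        have e2 : ψ s = 0 := max_eq_right (by linarith)
        simp only [hq, e1, e2]
        field_simp
        ring
      · have e1 : φ s = 0 := max_eq_right (by linarith)
        have e2 : ψ s = s - 1 / 2 := max_eq_left (by linarith)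
        simp only [hq, e1, e2]
        field_simp
        ring
    rw [intervalIntegral.integral_of_le h.le, setIntegral_congr_fun measurableSet_Ioc e,
      ← intervalIntegral.integral_of_le h.le, intervalIntegral.integral_const_mul,
      intervalIntegral.integral_sub
        (Continuous.intervalIntegrable (by fun_prop) _ _)
        (Continuous.intervalIntegrable (by fun_prop) _ _),
      intervalIntegral.integral_const_mul, intervalIntegral.integral_const_mul, ← hA, ← hB]
    ring
  · obtain ⟨M, hM⟩ := bdd (fun s => I⁻¹ * q s * (1 - s)) (by fun_prop)
    refine ⟨M, fun s hs => ?_⟩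
    have hs0 : s ≠ 0 := (hslo.trans_lt hs.1).ne'
    have e : I⁻¹ * (s * q s) * (1 - s) / s = I⁻¹ * q s * (1 - s) := by field_simp
    rw [e]
    exact hM s hs
  · intro s hs hne
    exact mul_pos (inv_pos.2 pI) (mul_pos (hslo.trans_lt hs.1) (pq s hne))

lemma Fclass_convex {slo shi : ℝ} (hslo : 0 ≤ slo) (h : slo < shi) {f k : ℝ → ℝ}
    (hf : f ∈ Fclass slo shi) (hk : k ∈ Fclass slo shi) {t : ℝ} (ht0 : 0 ≤ t) (ht1 : t ≤ 1) :
    (fun s => (1 - t) * f s + t * k s) ∈ Fclass slo shi := by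
  have if1 := Fclass_intervalIntegrable h hf
  have ik1 := Fclass_intervalIntegrable h hk
  have if2 := Fclass_intervalIntegrable_weight hslo h hf
  have ik2 := Fclass_intervalIntegrable_weight hslo h hk
  obtain ⟨fc, fn, f1, f0, ⟨M, hM⟩, ⟨N, hN⟩⟩ := hf
  obtain ⟨kc, kn, k1, k0, ⟨M', hM'⟩, ⟨N', hN'⟩⟩ := hk
  have ht : 0 ≤ 1 - t := sub_nonneg.2 ht1
  have tri : ∀ {x y X Y : ℝ}, |x| ≤ X → |y| ≤ Y →
      |(1 - t) * x + t * y| ≤ (1 - t) * X + t * Y := by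
    intro x y X Y hx hy
    refine (abs_add_le _ _).trans ?_
    rw [abs_mul, abs_mul, abs_of_nonneg ht, abs_of_nonneg ht0]
    gcongr
  refine ⟨by fun_prop, fun s hs => add_nonneg (mul_nonneg ht (fn s hs)) (mul_nonneg ht0 (kn s hs)),
    ?_, ?_, ⟨_, fun s hs => tri (hM s hs) (hM' s hs)⟩, ⟨(1 - t) * N + t * N', fun s hs => ?_⟩⟩
  · rw [intervalIntegral.integral_add (if1.const_mul _) (ik1.const_mul _),
      intervalIntegral.integral_const_mul, intervalIntegral.integral_const_mul, f1, k1]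
    ring
  · have e : (fun s => ((1 - t) * f s + t * k s) * (1 - 2 * s) / s) = fun s =>
        (1 - t) * (f s * (1 - 2 * s) / s) + t * (k s * (1 - 2 * s) / s) := by
      funext s
      ring
    rw [e, intervalIntegral.integral_add (if2.const_mul _) (ik2.const_mul _),
      intervalIntegral.integral_const_mul, intervalIntegral.integral_const_mul, f0, k0]
    ring
  · have e : ((1 - t) * f s + t * k s) * (1 - s) / s =
        (1 - t) * (f s * (1 - s) / s) + t * (k s * (1 - s) / s) := by ring
    rw [e]
    exact tri (hN s hs) (hN' s hs)

/-- Boundedness of signals makes the real supremum in `supDist` a genuine one. -/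
lemma abs_sub_le_supDist {slo shi : ℝ} {f g : ℝ → ℝ} (hf : f ∈ Fclass slo shi)
    (hg : g ∈ Fclass slo shi) {x : ℝ} (hx : x ∈ Ioo slo shi) :
    |f x - g x| ≤ supDist slo shi f g := by
  obtain ⟨-, -, -, -, ⟨M, hM⟩, -⟩ := hf
  obtain ⟨-, -, -, -, ⟨N, hN⟩, -⟩ := hg
  refine le_ciSup (f := fun s : Ioo slo shi => |f s.1 - g s.1|) ⟨M + N, ?_⟩ ⟨x, hx⟩
  rintro _ ⟨s, rfl⟩
  exact (abs_sub _ _).trans (add_le_add (hM s s.2) (hN s s.2))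

/-- for fixed z1 < z2 inside (slo, shi), the set of signals vanishing
a.e. on [z1, z2] is nowhere dense in F^∞. -/
theorem Fz_nowhere_dense
    (slo shi z1 z2 : ℝ) (hslo : 0 ≤ slo) (hshi : shi ≤ 1)
    (hz1 : slo < z1) (hz12 : z1 < z2) (hz2 : z2 < shi) :
    NowhereDenseIn slo shi
      {f ∈ Fclass slo shi | ∀ᵐ s ∂(volume.restrict (Icc z1 z2)), f s = 0} := by
  intro f hf ε hε
  have h : slo < shi := hz1.trans (hz12.trans hz2)
  obtain ⟨hl, hr⟩ := half_mem_of_mem_Fclass hslo h hf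
  obtain ⟨k, hk, kpos⟩ := exists_pos_signal hslo hl hr
  obtain ⟨x, hx, hxne⟩ : ∃ x ∈ Ioo z1 z2, x ≠ 1 / 2 := by
    obtain ⟨x, hx, hne⟩ := ((Ioo_infinite hz12).sdiff (finite_singleton (1 / 2 : ℝ))).nonempty
    exact ⟨x, hx, hne⟩
  have hsub : Ioo z1 z2 ⊆ Ioo slo shi := Ioo_subset_Ioo hz1.le hz2.le
  have hD : 0 ≤ supDist slo shi f k := Real.iSup_nonneg fun _ => abs_nonneg _
  set D := supDist slo shi f k with hDdef
  -- The factor `D + 1` gives the strict inequality `t * D < ε`.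
  set t := min 1 (ε / (D + 1)) with ht
  have t0 : 0 < t := lt_min one_pos (by positivity)
  have t1 : t ≤ 1 := min_le_left _ _
  have tD : t * D < ε := by
    have : t * (D + 1) ≤ ε := (le_div_iff₀ (by positivity)).1 (min_le_right _ _)
    nlinarith
  have hg := Fclass_convex hslo h hf hk t0.le t1
  have gx : 0 < (1 - t) * f x + t * k x :=
    add_pos_of_nonneg_of_pos (mul_nonneg (sub_nonneg.2 t1) (hf.2.1 x (hsub hx)))
      (mul_pos t0 (kpos x (hsub hx) hxne))
  refine ⟨_, hg, ?_, _, gx, ?_⟩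
  · refine lt_of_le_of_lt (Real.iSup_le (fun s => ?_) (by positivity)) tD
    have e : f s.1 - ((1 - t) * f s.1 + t * k s.1) = t * (f s.1 - k s.1) := by ring
    rw [e, abs_mul, abs_of_pos t0]
    exact mul_le_mul_of_nonneg_left (abs_sub_le_supDist hf hk s.2) t0.le
  · rintro u ⟨hu, hu0⟩ hlt
    have ux : u x = 0 := by
      refine Measure.eqOn_open_of_ae_eq (μ := volume) (f := u) (g := fun _ => 0) (U := Ioo z1 z2)
        ?_ isOpen_Ioo (hu.1.mono hsub) continuousOn_const hx
      exact ae_restrict_of_ae_restrict_of_subset Ioo_subset_Icc_self hu0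
    have hle := abs_sub_le_supDist hg hu (hsub hx)
    rw [ux, sub_zero, abs_of_pos gx] at hle
    exact hle.not_gt hlt
end
end

section
/- Assume E₀ ≠ ∅ and fix ε₀ > 0 such that C_{ε₀} ≠ ∅. Define λ̲ = min{(u − sup C_{ε₀})/(1 + sup C_{ε₀}), (v + inf C_{ε₀})/(1 − inf C_{ε₀})} and λ̄ = max{(u − inf C_{ε₀})/(1 + inf C_{ε₀}), (v + sup C_{ε₀})/(1 − sup C_{ε₀})}. Then 0 < λ̲ and λ̄ < +∞, and for every c ∈ [inf C_{ε₀}, sup C_{ε₀}]: if 0 < λ < λ̲ then m(λ,c) < 1/2 and mm(λ,c) < 1/2, while if λ > λ̄ then m(λ,c) > 1/2 and mm(λ,c) > 1/2. -/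
/-! Write `a = inf C_{ε₀}` and `b = sup C_{ε₀}`. Both intervals cutting out `C_{ε₀}` keep a
distance `ε₀` from the endpoints `-1`, `-v`, `u`, `1`, so for `a ≤ c ≤ b` all of `1 + c`, `u - c`,
`1 - c`, `v + c` are positive. A fraction `x / (x + y)` with `x, y > 0` lies below (above) `1/2`
exactly when `x < y` (`y < x`), so the match cutoff compares `λ` with `(u - c) / (1 + c)`, which is
decreasing in `c`, and the mismatch cutoff compares `λ` with `(v + c) / (1 - c)`, which is
increasing in `c`. The endpoint values therefore bound both thresholds uniformly in `c`. -/

open Set MeasureTheory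
open scoped ENNReal

noncomputable section

lemma div_add_lt_half {x y : ℝ} (hx : 0 < x) (h : x < y) : x / (x + y) < 1 / 2 := by
  rw [div_lt_div_iff₀ (by linarith) (by norm_num)]
  linarith

lemma half_lt_div_add {x y : ℝ} (hy : 0 < y) (h : y < x) : 1 / 2 < x / (x + y) := by
  rw [div_lt_div_iff₀ (by norm_num) (by linarith)]
  linarith

/-- 0 < λ̲ (and λ̄ is a finite real number), and for shocks in
[inf C_{ε₀}, sup C_{ε₀}], beliefs below λ̲ give cutoffs < 1/2 while beliefs
above λ̄ give cutoffs > 1/2. -/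
theorem lamLo_lamHi_bounds
    (u v slo shi e0 : ℝ) (hu : 0 < u) (hv : 0 < v)
    (hslo : 0 ≤ slo) (hss : slo < shi) (hshi : shi ≤ 1)
    (hE0 : (Econf u v slo shi 0).Nonempty)
    (he0 : 0 < e0) (hC : (Ceps u v slo shi e0).Nonempty) :
    0 < lamLo u v slo shi e0 ∧
    ∀ c ∈ Icc (sInf (Ceps u v slo shi e0)) (sSup (Ceps u v slo shi e0)),
      ∀ lam : ℝ,
        (0 < lam → lam < lamLo u v slo shi e0 →
          mcut u lam c < 1 / 2 ∧ mmcut v lam c < 1 / 2) ∧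
        (lamHi u v slo shi e0 < lam →
          1 / 2 < mcut u lam c ∧ 1 / 2 < mmcut v lam c) := by
  obtain ⟨c₀, hc₀⟩ := id hC
  have ha1 : -1 + e0 ≤ sInf (Ceps u v slo shi e0) := le_csInf hC fun x hx => hx.1.2.1.le
  have ha2 : -v + e0 ≤ sInf (Ceps u v slo shi e0) := le_csInf hC fun x hx => hx.2.1.le
  have hb1 : sSup (Ceps u v slo shi e0) ≤ u - e0 := csSup_le hC fun x hx => hx.1.2.2.le
  have hb2 : sSup (Ceps u v slo shi e0) ≤ 1 - e0 := csSup_le hC fun x hx => hx.2.2.le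
  have hab : sInf (Ceps u v slo shi e0) ≤ sSup (Ceps u v slo shi e0) :=
    (csInf_le ⟨_, fun x hx => hx.1.2.1.le⟩ hc₀).trans
      (le_csSup ⟨_, fun x hx => hx.1.2.2.le⟩ hc₀)
  unfold lamLo lamHi mcut mmcut
  generalize sInf (Ceps u v slo shi e0) = a at *
  generalize sSup (Ceps u v slo shi e0) = b at *
  refine ⟨lt_min (div_pos (by linarith) (by linarith)) (div_pos (by linarith) (by linarith)), ?_⟩
  rintro c ⟨hac, hcb⟩ lam
  refine ⟨fun hl h => ?_, fun h => ?_⟩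
  · obtain ⟨h1, h2⟩ := lt_min_iff.1 h
    rw [lt_div_iff₀ (by linarith)] at h1 h2
    have e1 : lam * (1 + c) ≤ lam * (1 + b) := by gcongr
    have e2 : lam * (1 - c) ≤ lam * (1 - a) := by gcongr
    exact ⟨div_add_lt_half (mul_pos hl (by linarith)) (by linarith),
      div_add_lt_half (mul_pos hl (by linarith)) (by linarith)⟩
  · obtain ⟨h1, h2⟩ := max_lt_iff.1 h
    have hl : 0 < lam := (div_pos (by linarith) (by linarith)).trans h1
    rw [div_lt_iff₀ (by linarith)] at h1 h2
    have e1 : lam * (1 + a) ≤ lam * (1 + c) := by gcongr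
    have e2 : lam * (1 - b) ≤ lam * (1 - c) := by gcongr
    exact ⟨half_lt_div_add (by linarith) (by linarith),
      half_lt_div_add (by linarith) (by linarith)⟩
end
end

section
/- Let 0 < s̲ < 1/2 < s̄ < 1 and let a < 0 and b > 1 be real numbers. Then there exists α ∈ ℝ such that ∫_{s̲}^{s̄} (1/2)(x − a)(b − x) e^{α(x − 1/2)} (1 − 2x) dx = 0. -/
/-!
After the substitution `t = x - 1/2`, the integral is `-2 * ∫ w(t) * t * exp (α t)` with a weight
`w` that is positive on an interval `[l, r]` containing `0` in its interior. For `0 ≤ α` the bound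
`t * exp (α t) ≥ t + α * (t * max t 0)` shows that this tilted first moment is nonnegative once `α`
is large (`exists_tilt_nonneg`); reflecting `t ↦ -t` makes it nonpositive for some other `α`.
It depends continuously on `α`, so the intermediate value theorem gives a zero.
-/

open Set MeasureTheory
open scoped ENNReal

noncomputable section

/-- A large tilt makes the first moment of a positive weight nonnegative. -/
lemma exists_tilt_nonneg (w : ℝ → ℝ) (hw : Continuous w) (l r : ℝ) (hl : l < 0) (hr : 0 < r)
    (hpos : ∀ t ∈ Icc l r, 0 < w t) :
    ∃ α : ℝ, 0 ≤ ∫ t in l..r, w t * (t * Real.exp (α * t)) := by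
  have hlr : l < r := hl.trans hr
  have hD : 0 < ∫ t in l..r, w t * (t * max t 0) := by
    apply intervalIntegral.integral_pos hlr (by fun_prop)
    · intro t ht
      have h : 0 ≤ t * max t 0 := by
        rcases le_total t 0 with h | h
        · simp [h]
        · rw [max_eq_left h]; positivity
      exact mul_nonneg (hpos t ⟨ht.1.le, ht.2⟩).le h
    · refine ⟨r, ⟨hlr.le, le_rfl⟩, ?_⟩
      rw [max_eq_left hr.le]
      have := hpos r ⟨hlr.le, le_rfl⟩
      positivity
  set D := ∫ t in l..r, w t * (t * max t 0)
  set C := ∫ t in l..r, w t * t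
  have hα : 0 ≤ |C| / D := by positivity
  refine ⟨|C| / D, ?_⟩
  calc 0 ≤ C + |C| / D * D := by
        rw [div_mul_cancel₀ _ hD.ne']; linarith [neg_abs_le C]
    _ = ∫ t in l..r, (w t * t + |C| / D * (w t * (t * max t 0))) := by
        rw [intervalIntegral.integral_add, intervalIntegral.integral_const_mul]
        · exact Continuous.intervalIntegrable (by fun_prop) _ _
        · exact Continuous.intervalIntegrable (by fun_prop) _ _
    _ ≤ _ := by
        apply intervalIntegral.integral_mono_on hlr.le
        · exact Continuous.intervalIntegrable (by fun_prop) _ _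
        · exact Continuous.intervalIntegrable (by fun_prop) _ _
        intro t ht
        have key : t + |C| / D * (t * max t 0) ≤ t * Real.exp (|C| / D * t) := by
          rcases le_total t 0 with h | h
          · rw [max_eq_right h]
            have : Real.exp (|C| / D * t) ≤ 1 :=
              Real.exp_le_one_iff.mpr (mul_nonpos_of_nonneg_of_nonpos hα h)
            nlinarith
          · rw [max_eq_left h]
            nlinarith [mul_le_mul_of_nonneg_left (Real.add_one_le_exp (|C| / D * t)) h]
        nlinarith [mul_le_mul_of_nonneg_left key (hpos t ht).le]

/-- Some tilt makes the first moment of a positive weight vanish. -/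
lemma exists_tilt_zero (w : ℝ → ℝ) (hw : Continuous w) (l r : ℝ) (hl : l < 0) (hr : 0 < r)
    (hpos : ∀ t ∈ Icc l r, 0 < w t) :
    ∃ α : ℝ, ∫ t in l..r, w t * (t * Real.exp (α * t)) = 0 := by
  obtain ⟨α, hα⟩ := exists_tilt_nonneg w hw l r hl hr hpos
  obtain ⟨β, hβ⟩ := exists_tilt_nonneg (fun t => w (-t)) (by fun_prop) (-r) (-l)
    (by linarith) (by linarith)
    (fun t ht => hpos (-t) ⟨by linarith [ht.2], by linarith [ht.1]⟩)
  have hβ' : ∫ t in l..r, w t * (t * Real.exp (-β * t)) ≤ 0 := by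
    have h := intervalIntegral.integral_comp_neg (a := -r) (b := -l)
      (fun t => w t * (t * Real.exp (-β * t)))
    simp only [neg_neg, neg_mul, mul_neg, intervalIntegral.integral_neg] at h hβ ⊢
    linarith
  have hcont : Continuous fun α : ℝ => ∫ t in l..r, w t * (t * Real.exp (α * t)) :=
    intervalIntegral.continuous_parametric_intervalIntegral_of_continuous' (by fun_prop) _ _
  exact mem_range_of_exists_le_of_exists_ge hcont ⟨-β, hβ'⟩ ⟨α, hα⟩

/-- existence of the tilt α making the lifting function orthogonal
to (1 - 2x) on [slo, shi]. -/
theorem lifting_function_exists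
    (slo shi a b : ℝ)
    (h0 : 0 < slo) (h1 : slo < 1 / 2) (h2 : 1 / 2 < shi) (h3 : shi < 1)
    (ha : a < 0) (hb : 1 < b) :
    ∃ α : ℝ, (∫ x in slo..shi,
      (1 / 2) * (x - a) * (b - x) * Real.exp (α * (x - 1 / 2)) * (1 - 2 * x)) = 0 := by
  obtain ⟨α, hα⟩ := exists_tilt_zero
    (fun t => (t + 1 / 2 - a) * (b - (t + 1 / 2))) (by fun_prop) (slo - 1 / 2) (shi - 1 / 2)
    (by linarith) (by linarith)
    (fun t ht => mul_pos (by linarith [ht.1]) (by linarith [ht.2]))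
  refine ⟨α, ?_⟩
  rw [← intervalIntegral.integral_comp_sub_right
    (fun t => (t + 1 / 2 - a) * (b - (t + 1 / 2)) * (t * Real.exp (α * t)))] at hα
  rw [← neg_eq_zero, ← intervalIntegral.integral_neg, ← hα]
  congr 1
  ext x
  ring_nf
end
end

section
/- Assume u ≠ v, 0 < s̲ < s̄ < 1, and E₀ ≠ ∅. For c ∈ ℝ define the herding region H_c = {λ > 0 : m(λ,c) ∉ (s̲,s̄) and mm(λ,c) ∉ (s̲,s̄)}. Then there exists δ > 0 such that for every c with |c| < δ, E₀ ∩ H_c = ∅; that is, no belief in the confounding region without shock lies in the herding region under any sufficiently small shock. -/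
/-!
Write `a c = (u - c) / (1 + c)` and `b c = (v + c) / (1 - c)`, and let `A < B` be the odds ratios
`slo / (1 - slo)` and `shi / (1 - shi)`. For small `c`, the match cutoff is in `(slo, shi)` exactly
when `A * a c < lam < B * a c`, and the mismatch cutoff exactly when `A * b c < lam < B * b c`
(`mcut_mem_Ioo_iff`). If `u < v`, the region without shock is thus `(A * v, B * u)`, and for small
`c` its points satisfy `A * a c < lam < B * b c`. Such a point herds under `c` only if
`B * a c ≤ lam ≤ A * b c`, which is impossible for small `c`: nonemptiness of the region without
shock says `A * v < B * u`, and this strict inequality persists near `c = 0`. The case `v < u`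
follows because swapping `u` and `v` and negating `c` exchanges the two cutoffs.
-/

open Set MeasureTheory
open scoped ENNReal

noncomputable section

lemma mmcut_eq_mcut_neg (v lam c : ℝ) : mmcut v lam c = mcut v lam (-c) := by
  simp only [mmcut, mcut, sub_eq_add_neg, neg_neg]

/-- A cutoff lies in the signal range iff the belief lies in the interval whose endpoints are the
odds ratios of the signal bounds scaled by `(u - c) / (1 + c)`. -/
lemma mcut_mem_Ioo_iff {u lam c slo shi : ℝ} (hc : 0 < 1 + c) (huc : 0 < u - c) (hlam : 0 < lam)
    (hslo : slo < 1) (hshi : shi < 1) :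
    mcut u lam c ∈ Ioo slo shi ↔
      slo / (1 - slo) * ((u - c) / (1 + c)) < lam ∧
        lam < shi / (1 - shi) * ((u - c) / (1 + c)) := by
  have h1 : 0 < lam * (1 + c) + (u - c) := by positivity
  have h2 : 0 < (1 - slo) * (1 + c) := mul_pos (by linarith) hc
  have h3 : 0 < (1 - shi) * (1 + c) := mul_pos (by linarith) hc
  rw [mcut, mem_Ioo, lt_div_iff₀ h1, div_lt_iff₀ h1, div_mul_div_comm, div_mul_div_comm,
    div_lt_iff₀ h2, lt_div_iff₀ h3]
  constructor <;> rintro ⟨h, h'⟩ <;> constructor <;> nlinarith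

/-- The case `u < v`, with both cutoffs expressed through `mcut` so that the statement can be
reused with the two types exchanged. -/
lemma exists_delta_of_lt {u v slo shi : ℝ} (hu : 0 < u) (huv : u < v)
    (hslo : 0 < slo) (hss : slo < shi) (hshi : shi < 1)
    (hE : ∃ lam : ℝ, 0 < lam ∧ mcut u lam 0 ∈ Ioo slo shi ∧ mcut v lam 0 ∈ Ioo slo shi) :
    ∃ δ > (0 : ℝ), ∀ c : ℝ, |c| < δ → ∀ lam : ℝ, 0 < lam →
      mcut u lam 0 ∈ Ioo slo shi → mcut v lam 0 ∈ Ioo slo shi →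
        mcut u lam c ∈ Ioo slo shi ∨ mcut v lam (-c) ∈ Ioo slo shi := by
  have hv : 0 < v := hu.trans huv
  have hslo1 : slo < 1 := hss.trans hshi
  have hm : ∀ {w lam : ℝ}, 0 < w → 0 < lam → (mcut w lam 0 ∈ Ioo slo shi ↔
      slo / (1 - slo) * w < lam ∧ lam < shi / (1 - shi) * w) := fun {w lam} hw hl => by
    simpa using mcut_mem_Ioo_iff (c := 0) (by simp) (by simpa using hw) hl hslo1 hshi
  have hA : 0 < slo / (1 - slo) := div_pos hslo (by linarith)
  have hB : 0 < shi / (1 - shi) := div_pos (by linarith) (by linarith)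
  have hM : ∀ {w lam c : ℝ}, 0 < 1 + c → 0 < w - c → 0 < lam → (mcut w lam c ∈ Ioo slo shi ↔ _) :=
    fun h1 h2 h3 => mcut_mem_Ioo_iff h1 h2 h3 hslo1 hshi
  generalize slo / (1 - slo) = A at *
  generalize shi / (1 - shi) = B at *
  have hAB : A * v < B * u := by
    obtain ⟨lam, hl, h1, h2⟩ := hE
    exact ((hm hv hl).1 h2).1.trans ((hm hu hl).1 h1).2
  have ha : ContinuousAt (fun c : ℝ => (u - c) / (1 + c)) 0 :=
    ContinuousAt.div (by fun_prop) (by fun_prop) (by simp)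
  have hb : ContinuousAt (fun c : ℝ => (v - -c) / (1 + -c)) 0 :=
    ContinuousAt.div (by fun_prop) (by fun_prop) (by simp)
  have c1 : ContinuousAt (fun c : ℝ => 1 + c) 0 := by fun_prop
  have c2 : ContinuousAt (fun c : ℝ => 1 + -c) 0 := by fun_prop
  have c3 : ContinuousAt (fun c : ℝ => u - c) 0 := by fun_prop
  have c4 : ContinuousAt (fun c : ℝ => v - -c) 0 := by fun_prop
  have ev := (c1.eventually_const_lt (u := 0) (by simp)).and <|
    (c2.eventually_const_lt (u := 0) (by simp)).and <|
    (c3.eventually_const_lt (u := 0) (by simpa using hu)).and <|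
    (c4.eventually_const_lt (u := 0) (by simpa using hv)).and <|
    (ha.eventually_lt_const (u := v) (by simpa using huv)).and <|
    (hb.eventually_const_lt (u := u) (by simpa using huv)).and <|
    (hb.const_mul A).eventually_lt (ha.const_mul B) (by simpa using hAB)
  obtain ⟨δ, hδ, H⟩ := Metric.eventually_nhds_iff.1 ev
  refine ⟨δ, hδ, fun c hc lam hl h1 h2 => ?_⟩
  obtain ⟨e1, e2, e3, e4, e5, e6, e7⟩ := H (y := c) (by simpa using hc)
  rw [hM e1 e3 hl, hM e2 e4 hl]
  rw [hm hu hl] at h1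
  rw [hm hv hl] at h2
  have h3 := mul_lt_mul_of_pos_left e5 hA
  have h4 := mul_lt_mul_of_pos_left e6 hB
  by_cases h : lam < B * ((u - c) / (1 + c))
  · exact Or.inl ⟨h3.trans h2.1, h⟩
  · exact Or.inr ⟨e7.trans_le (not_lt.1 h), h1.2.trans h4⟩

/-- no first-type mixed learning: for all sufficiently small shocks c,
the no-shock confounding region is disjoint from the herding region under c. -/
theorem no_first_type_mixed_learning
    (u v slo shi : ℝ) (hu : 0 < u) (hv : 0 < v) (huv : u ≠ v)
    (hslo : 0 < slo) (hss : slo < shi) (hshi : shi < 1)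
    (hE0 : (Econf u v slo shi 0).Nonempty) :
    ∃ δ > (0:ℝ), ∀ c : ℝ, |c| < δ →
      Econf u v slo shi 0 ∩
        {lam : ℝ | 0 < lam ∧ mcut u lam c ∉ Ioo slo shi ∧ mmcut v lam c ∉ Ioo slo shi}
        = ∅ := by
  rcases lt_or_gt_of_ne huv with h | h
  · obtain ⟨lam₀, hl₀, h₁, h₂⟩ := hE0
    rw [mmcut_eq_mcut_neg, neg_zero] at h₂
    obtain ⟨δ, hδ, H⟩ := exists_delta_of_lt hu h hslo hss hshi ⟨lam₀, hl₀, h₁, h₂⟩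
    refine ⟨δ, hδ, fun c hc => eq_empty_iff_forall_notMem.2 ?_⟩
    rintro lam ⟨⟨hl, k₁, k₂⟩, -, n₁, n₂⟩
    rw [mmcut_eq_mcut_neg] at k₂ n₂
    rw [neg_zero] at k₂
    exact (H c hc lam hl k₁ k₂).elim n₁ n₂
  · obtain ⟨lam₀, hl₀, h₁, h₂⟩ := hE0
    rw [mmcut_eq_mcut_neg, neg_zero] at h₂
    obtain ⟨δ, hδ, H⟩ := exists_delta_of_lt hv h hslo hss hshi ⟨lam₀, hl₀, h₂, h₁⟩
    refine ⟨δ, hδ, fun c hc => eq_empty_iff_forall_notMem.2 ?_⟩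
    rintro lam ⟨⟨hl, k₁, k₂⟩, -, n₁, n₂⟩
    rw [mmcut_eq_mcut_neg] at k₂ n₂
    rw [neg_zero] at k₂
    have := H (-c) (by rwa [abs_neg]) lam hl k₂ k₁
    rw [neg_neg] at this
    exact this.elim n₂ n₁
end
end
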